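/- arXiv:2403.07619 — 3 statements merged into one kernel-verified Lean document; each statement's English description precedes it below -/
import Mathlib

section
/- Let R be a ring and C a class of finitely presented left R-modules closed under finite direct sums. A left R-module M belongs to lim→ C (the class of direct limits of modules in C) if and only if there is a pure epimorphism f : ⊕_{i∈I} C_i → M for some family (C_i) of modules in C. -/
/-!
For a directed system of modules `G i`, a homomorphism from a finitely presented module to its
direct limit factors through some `G i`: finitely many generators land in a common stage, and their
finitely many relations already hold at a later one (`exists_factor_directLimit`).  Hence the
canonical map `⨁ i, G i → lim G` is a pure epimorphism.

Conversely, let `f : ⨁ i, Cf i → M` be a pure epimorphism.  A homomorphism from a finitely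
generated module to `⨁ i, Cf i` factors through a finite sum of the `Cf i`
(`exists_factor_directSum`), so every homomorphism from a finitely presented module to `M` factors
through such a finite sum.  Consider the small category `SumOver Cf M` of finite iterated sums of
the `Cf i` equipped with a map to `M`.  Given `X` in it and a finitely generated submodule `K` of
`ker (X → M)`, the module `X / K` is finitely presented, so `X / K → M` factors through an object
`Y`; thus `X` maps over `M` to an object `Y` in which `K` dies (`SumOver.exists_kill`).  This shows
both that the category is filtered (take `K` to be the range of the difference of two parallel
maps) and that elements vanishing in `M` vanish at a later stage, so `M` is the colimit of the
modules in this category.  A final functor from a directed poset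
(`CategoryTheory.IsFiltered.exists_directed`) turns this filtered colimit into a direct limit.

Since `C` need not be closed under isomorphism nor contain a zero module, finite sums are taken to
be nonempty iterated binary products; the empty family is treated separately.
-/

open CategoryTheory DirectSum

/-- A presentation of the module `M` as a direct limit of a directed system of modules all
belonging to the class `C`. -/
structure DirectLimitPresentation (R : Type) [Ring R] (C : ModuleCat.{0} R → Prop)
    (M : Type) [AddCommGroup M] [Module R M] where
  ι : Type
  [dec : DecidableEq ι]
  [pre : Preorder ι]
  directed : IsDirected ι (· ≤ ·)
  G : ι → ModuleCat.{0} R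
  f : ∀ i j, i ≤ j → (G i : Type) →ₗ[R] (G j : Type)
  system : DirectedSystem (fun i => (G i : Type)) (fun i j h x => f i j h x)
  memC : ∀ i, C (G i)
  equiv : Module.DirectLimit (fun i => (G i : Type)) f ≃ₗ[R] M

/-- `M` is a direct limit of modules in the class `C`. -/
def InLim (R : Type) [Ring R] (C : ModuleCat.{0} R → Prop)
    (M : Type) [AddCommGroup M] [Module R M] : Prop :=
  Nonempty (DirectLimitPresentation R C M)

/-- A surjective linear map `π : Y → Z` is a pure epimorphism if its kernel is a pure
submodule of `Y`, equivalently every homomorphism from a finitely presented module to `Z`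
lifts along `π`. -/
def IsPureEpi (R : Type) [Ring R] {Y Z : Type} [AddCommGroup Y] [Module R Y]
    [AddCommGroup Z] [Module R Z] (π : Y →ₗ[R] Z) : Prop :=
  Function.Surjective π ∧
    ∀ (P : Type) (_ : AddCommGroup P) (_ : Module R P), Module.FinitePresentation R P →
      ∀ h : P →ₗ[R] Z, ∃ g : P →ₗ[R] Y, π.comp g = h

section DirectLimit

variable {R : Type} [Ring R] {ι : Type} [DecidableEq ι] [Preorder ι] [IsDirectedOrder ι]
  [Nonempty ι] {G : ι → Type} [∀ i, AddCommGroup (G i)] [∀ i, Module R (G i)]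
  {f : ∀ i j, i ≤ j → G i →ₗ[R] G j}

theorem exists_factor_directLimit_of_free {n : ℕ}
    (h : (Fin n → R) →ₗ[R] Module.DirectLimit G f) :
    ∃ i, ∃ g : (Fin n → R) →ₗ[R] G i, Module.DirectLimit.of R ι G f i ∘ₗ g = h := by
  choose i x hx using fun k : Fin n =>
    Module.DirectLimit.exists_of (h (Pi.basisFun R (Fin n) k))
  obtain ⟨j, hj⟩ := Finite.exists_le i
  refine ⟨j, (Pi.basisFun R (Fin n)).constr ℕ fun k => f (i k) j (hj k) (x k), ?_⟩
  refine (Pi.basisFun R (Fin n)).ext fun k => ?_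
  rw [LinearMap.comp_apply, Module.Basis.constr_basis, Module.DirectLimit.of_f, hx]

variable [DirectedSystem G (fun i j h x => f i j h x)]

/-- A finitely generated submodule that vanishes in the direct limit vanishes at a later stage. -/
theorem exists_le_ker_of_le_ker_of {P : Type} [AddCommGroup P] [Module R P] {K : Submodule R P}
    (hK : K.FG) {i : ι} (g : P →ₗ[R] G i)
    (hg : K ≤ LinearMap.ker (Module.DirectLimit.of R ι G f i ∘ₗ g)) :
    ∃ j, ∃ hij : i ≤ j, K ≤ LinearMap.ker (f i j hij ∘ₗ g) := by
  obtain ⟨S, rfl⟩ := hK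
  rw [Submodule.span_le] at hg
  choose j hij hj using fun s : S =>
    Module.DirectLimit.of.zero_exact (R := R) (f := f) (hg s.2)
  obtain ⟨k, hk⟩ := Finite.exists_le j
  obtain ⟨l, hkl, hil⟩ := exists_ge_ge k i
  refine ⟨l, hil, Submodule.span_le.2 fun s hs => ?_⟩
  have hjl : j ⟨s, hs⟩ ≤ l := (hk ⟨s, hs⟩).trans hkl
  have := DirectedSystem.map_map' (f := f) (hij ⟨s, hs⟩) hjl (g s)
  change f i l hil (g s) = 0
  rw [← this, hj ⟨s, hs⟩, map_zero]

theorem exists_factor_directLimit {P : Type} [AddCommGroup P] [Module R P]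
    [Module.FinitePresentation R P] (h : P →ₗ[R] Module.DirectLimit G f) :
    ∃ i, ∃ g : P →ₗ[R] G i, Module.DirectLimit.of R ι G f i ∘ₗ g = h := by
  obtain ⟨n, K, e, hK⟩ := Module.FinitePresentation.exists_fin R P
  obtain ⟨i, g, hg⟩ := exists_factor_directLimit_of_free (h ∘ₗ e.symm.toLinearMap ∘ₗ K.mkQ)
  obtain ⟨j, hij, hj⟩ := exists_le_ker_of_le_ker_of hK g (by
    intro x hx
    rw [hg]
    simp [(Submodule.Quotient.mk_eq_zero K).2 hx])
  refine ⟨j, K.liftQ _ hj ∘ₗ e.toLinearMap, LinearMap.ext fun p => ?_⟩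
  obtain ⟨q, rfl⟩ := e.symm.surjective p
  obtain ⟨x, rfl⟩ := K.mkQ_surjective q
  have := LinearMap.congr_fun hg x
  simpa using this

end DirectLimit

section DirectSum

variable {R : Type} [Ring R] {ι : Type}

/-- The iterated product of members of the family `Cf`, bracketed as prescribed by a word of the
free magma on the index set. -/
def iteratedSum (Cf : ι → ModuleCat.{0} R) : FreeMagma ι → ModuleCat.{0} R
  | .of i => Cf i
  | .mul s t => ModuleCat.of R (iteratedSum Cf s × iteratedSum Cf t)

theorem iteratedSum_mem {Cf : ι → ModuleCat.{0} R} {C : ModuleCat.{0} R → Prop}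
    (hsum : ∀ N₁ N₂ : ModuleCat.{0} R, C N₁ → C N₂ → C (ModuleCat.of R (N₁ × N₂)))
    (hC : ∀ i, C (Cf i)) : ∀ t, C (iteratedSum Cf t)
  | .of i => hC i
  | .mul s t => hsum _ _ (iteratedSum_mem hsum hC s) (iteratedSum_mem hsum hC t)

theorem exists_factor_add {Cf : ι → ModuleCat.{0} R} {P D : Type} [AddCommGroup P] [Module R P]
    [AddCommGroup D] [Module R D] {g₁ g₂ : P →ₗ[R] D}
    (h₁ : ∃ t, ∃ (u : P →ₗ[R] iteratedSum Cf t) (v : iteratedSum Cf t →ₗ[R] D), v ∘ₗ u = g₁)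
    (h₂ : ∃ t, ∃ (u : P →ₗ[R] iteratedSum Cf t) (v : iteratedSum Cf t →ₗ[R] D), v ∘ₗ u = g₂) :
    ∃ t, ∃ (u : P →ₗ[R] iteratedSum Cf t) (v : iteratedSum Cf t →ₗ[R] D),
      v ∘ₗ u = g₁ + g₂ := by
  obtain ⟨t₁, u₁, v₁, rfl⟩ := h₁
  obtain ⟨t₂, u₂, v₂, rfl⟩ := h₂
  exact ⟨.mul t₁ t₂, u₁.prod u₂, v₁.coprod v₂, LinearMap.coprod_comp_prod _ _ _ _⟩

theorem exists_factor_directSum [DecidableEq ι] [Nonempty ι] {Cf : ι → ModuleCat.{0} R}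
    {P : Type} [AddCommGroup P] [Module R P] [Module.Finite R P]
    (g : P →ₗ[R] ⨁ i, (Cf i : Type)) :
    ∃ t, ∃ (u : P →ₗ[R] iteratedSum Cf t) (v : iteratedSum Cf t →ₗ[R] ⨁ i, (Cf i : Type)),
      v ∘ₗ u = g := by
  classical
  obtain ⟨S, hS⟩ := Module.Finite.fg_top (R := R) (M := P)
  -- `g` is the sum of its components over the union of the supports of the images of generators.
  have hg : g = ∑ i ∈ S.biUnion fun s => DFinsupp.support (g s),
      DirectSum.lof R ι (fun i => (Cf i : Type)) i ∘ₗ DirectSum.component R ι _ i ∘ₗ g := by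
    refine LinearMap.ext_on hS fun s hs => ?_
    rw [LinearMap.sum_apply]
    refine (DirectSum.sum_support_of (g s)).symm.trans (Finset.sum_subset
      (Finset.subset_biUnion_of_mem (fun s => DFinsupp.support (g s)) hs) fun i _ hi => ?_)
    rw [DFinsupp.notMem_support_iff.1 hi, map_zero]
  rw [hg]
  refine Finset.sum_induction _ (fun g => ∃ t, ∃ (u : P →ₗ[R] iteratedSum Cf t)
    (v : iteratedSum Cf t →ₗ[R] ⨁ i, (Cf i : Type)), v ∘ₗ u = g)
    (fun _ _ => exists_factor_add) ?_ ?_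
  · exact ⟨.of (Classical.arbitrary ι), 0, 0, by simp⟩
  · exact fun i _ => ⟨.of i, DirectSum.component R ι _ i ∘ₗ g,
      DirectSum.lof R ι (fun i => (Cf i : Type)) i, rfl⟩

end DirectSum

/-- An object of the category of finite iterated sums of members of `Cf` over `M`. -/
structure SumOver {R : Type} [Ring R] {ι : Type} (Cf : ι → ModuleCat.{0} R)
    (M : Type) [AddCommGroup M] [Module R M] where
  word : FreeMagma ι
  toM : iteratedSum Cf word →ₗ[R] M

namespace SumOver

variable {R : Type} [Ring R] {ι : Type} {Cf : ι → ModuleCat.{0} R}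
  {M : Type} [AddCommGroup M] [Module R M]

/-- The underlying module of an object over `M`. -/
abbrev carrier (X : SumOver Cf M) : ModuleCat.{0} R := iteratedSum Cf X.word

/-- Morphisms are the linear maps commuting with the maps to `M`. -/
instance : SmallCategory (SumOver Cf M) where
  Hom X Y := {u : X.carrier →ₗ[R] Y.carrier // Y.toM ∘ₗ u = X.toM}
  id X := ⟨LinearMap.id, rfl⟩
  comp u v := ⟨v.1 ∘ₗ u.1, by rw [← LinearMap.comp_assoc, v.2, u.2]⟩

theorem toM_hom {X Y : SumOver Cf M} (u : X ⟶ Y) (x : X.carrier) : Y.toM (u.1 x) = X.toM x :=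
  LinearMap.congr_fun u.2 x

/-- Homomorphisms from finitely presented modules to `M` factor through objects over `M`. -/
def Factors (Cf : ι → ModuleCat.{0} R) (M : Type) [AddCommGroup M] [Module R M] : Prop :=
  ∀ (P : Type) [AddCommGroup P] [Module R P] [Module.FinitePresentation R P] (h : P →ₗ[R] M),
    ∃ (Y : SumOver Cf M) (u : P →ₗ[R] Y.carrier), Y.toM ∘ₗ u = h

/-- A finitely generated submodule of `X` vanishing in `M` is killed by a morphism out of `X`. -/
theorem exists_kill (hfac : Factors Cf M) (X : SumOver Cf M)
    [Module.FinitePresentation R X.carrier] {K : Submodule R X.carrier} (hK : K.FG)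
    (hKM : K ≤ LinearMap.ker X.toM) :
    ∃ (Y : SumOver Cf M) (v : X ⟶ Y), K ≤ LinearMap.ker v.1 := by
  have : Module.FinitePresentation R (X.carrier ⧸ K) :=
    Module.finitePresentation_of_surjective K.mkQ K.mkQ_surjective (by rwa [K.ker_mkQ])
  obtain ⟨Y, u, hu⟩ := hfac _ (K.liftQ X.toM hKM)
  refine ⟨Y, ⟨u ∘ₗ K.mkQ, ?_⟩, ?_⟩
  · rw [← LinearMap.comp_assoc, hu, K.liftQ_mkQ]
  · intro x hx
    simp [(Submodule.Quotient.mk_eq_zero K).2 hx]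

theorem isFiltered [Nonempty ι] (hfac : Factors Cf M)
    (hfp : ∀ t, Module.FinitePresentation R (iteratedSum Cf t)) :
    IsFiltered (SumOver Cf M) where
  nonempty := ⟨⟨.of (Classical.arbitrary ι), 0⟩⟩
  cocone_objs X Y := ⟨⟨.mul X.word Y.word, X.toM.coprod Y.toM⟩,
    ⟨LinearMap.inl R X.carrier Y.carrier, LinearMap.coprod_inl _ _⟩,
    ⟨LinearMap.inr R X.carrier Y.carrier, LinearMap.coprod_inr _ _⟩, trivial⟩
  cocone_maps X Y a b := by
    have := hfp X.word
    have := hfp Y.word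
    obtain ⟨Z, v, hv⟩ := exists_kill hfac Y (K := LinearMap.range (a.1 - b.1))
      (by rw [LinearMap.range_eq_map]; exact Module.Finite.fg_top.map _) (by
        rintro _ ⟨x, rfl⟩
        simp [toM_hom])
    refine ⟨Z, v, Subtype.ext (LinearMap.ext fun x => ?_)⟩
    have : v.1 ((a.1 - b.1) x) = 0 := hv ⟨x, rfl⟩
    rwa [LinearMap.sub_apply, map_sub, sub_eq_zero] at this

theorem inLim [Nonempty ι] (hfac : Factors Cf M) {C : ModuleCat.{0} R → Prop}
    (hfp : ∀ N, C N → Module.FinitePresentation R N)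
    (hC : ∀ t, C (iteratedSum Cf t)) : InLim R C M := by
  classical
  have hfp' : ∀ t, Module.FinitePresentation R (iteratedSum Cf t) := fun t => hfp _ (hC t)
  have := isFiltered hfac hfp'
  obtain ⟨α, _, hdir, _, F, hF⟩ := IsFiltered.exists_directed (SumOver Cf M)
  let f : ∀ i j : α, i ≤ j → (F.obj i).carrier →ₗ[R] (F.obj j).carrier :=
    fun i j h => (F.map (homOfLE h)).1
  have hsys : DirectedSystem (fun i => ((F.obj i).carrier : Type)) (fun i j h x => f i j h x) :=
    { map_self := fun i x => by
        change (F.map (𝟙 i)).1 x = x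
        rw [F.map_id]; rfl
      map_map := fun i j k hij hjk x => by
        change (F.map (homOfLE hjk)).1 ((F.map (homOfLE hij)).1 x) = (F.map (homOfLE _)).1 x
        rw [← homOfLE_comp hij hjk, F.map_comp]; rfl }
  let φ : Module.DirectLimit (fun i => ((F.obj i).carrier : Type)) f →ₗ[R] M :=
    Module.DirectLimit.lift R α _ f (fun i => (F.obj i).toM) fun i j h x => toM_hom _ x
  obtain ⟨hF₁, -⟩ := (Functor.final_iff_of_isFiltered F).1 hF
  refine ⟨{ ι := α, directed := hdir, G := fun i => (F.obj i).carrier, f := f, system := hsys,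
            memC := fun i => hC _, equiv := LinearEquiv.ofBijective φ ⟨?_, ?_⟩ }⟩
  · rw [injective_iff_map_eq_zero]
    intro z hz
    obtain ⟨i, x, rfl⟩ := Module.DirectLimit.exists_of z
    have hx : (F.obj i).toM x = 0 := by simpa [φ] using hz
    have := hfp' (F.obj i).word
    obtain ⟨Y, v, hv⟩ := exists_kill hfac (F.obj i) (Submodule.fg_span_singleton x)
      ((Submodule.span_singleton_le_iff_mem _ _).2 hx)
    have hvx : v.1 x = 0 := hv (Submodule.mem_span_singleton_self x)
    obtain ⟨j, ⟨w⟩⟩ := hF₁ Y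
    obtain ⟨k, hik, hjk⟩ := exists_ge_ge i j
    -- `v ≫ w` followed by `j ≤ k` need not be the transition map `i ≤ k`, but finality
    -- makes the two agree at some stage `l`.
    obtain ⟨l, t, ht⟩ := Functor.Final.exists_coeq F (F.map (homOfLE hik))
      (v ≫ w ≫ F.map (homOfLE hjk))
    have hxl : f i l (hik.trans (leOfHom t)) x = 0 := by
      have h₁ : F.map (homOfLE (hik.trans (leOfHom t))) = F.map (homOfLE hik) ≫ F.map t := by
        rw [← F.map_comp]; rfl
      change (F.map (homOfLE (hik.trans (leOfHom t)))).1 x = 0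
      rw [h₁, ht]
      change (F.map t).1 ((F.map (homOfLE hjk)).1 (w.1 (v.1 x))) = 0
      simp [hvx]
    rw [← Module.DirectLimit.of_f (hij := hik.trans (leOfHom t)), hxl, map_zero]
  · intro m
    obtain ⟨Y, u, hu⟩ := hfac R (LinearMap.toSpanSingleton R M m)
    obtain ⟨i, ⟨w⟩⟩ := hF₁ Y
    refine ⟨Module.DirectLimit.of R α _ f i (w.1 (u 1)), ?_⟩
    have := LinearMap.congr_fun hu 1
    simpa [φ, toM_hom] using this

end SumOver

/-- Let `C` be a class of finitely presented `R`-modules closed under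
finite direct sums.  A module `M` belongs to `lim→ C` if and only if there is a pure
epimorphism `⊕_{i ∈ I} C_i → M` for some family `(C_i)` of modules in `C`. -/
theorem inLim_iff_pureEpi
    (R : Type) [Ring R] (C : ModuleCat.{0} R → Prop)
    (hfp : ∀ N, C N → Module.FinitePresentation R N)
    (hsum : ∀ N₁ N₂ : ModuleCat.{0} R, C N₁ → C N₂ → C (ModuleCat.of R (N₁ × N₂)))
    (M : Type) [AddCommGroup M] [Module R M] :
    InLim R C M ↔
      ∃ (ι : Type) (Cf : ι → ModuleCat.{0} R) (_ : DecidableEq ι), (∀ i, C (Cf i)) ∧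
        ∃ f : (⨁ i, (Cf i : Type)) →ₗ[R] M, IsPureEpi R f := by
  constructor
  · rintro ⟨@⟨ι, _, _, _, G, f, _, hC, e⟩⟩
    let π : (⨁ i, (G i : Type)) →ₗ[R] M :=
      DirectSum.toModule R ι M fun i => e.toLinearMap ∘ₗ Module.DirectLimit.of R ι _ f i
    have hlift : ∀ (P : Type) (_ : AddCommGroup P) (_ : Module R P),
        Module.FinitePresentation R P →
          ∀ h : P →ₗ[R] M, ∃ g : P →ₗ[R] ⨁ i, (G i : Type), π.comp g = h := by
      intro P _ _ _ h
      cases isEmpty_or_nonempty ι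
      · have : Subsingleton (Module.DirectLimit (fun i => (G i : Type)) f) := inferInstance
        have : Subsingleton M := e.symm.injective.subsingleton
        exact ⟨0, LinearMap.ext fun _ => Subsingleton.elim _ _⟩
      · obtain ⟨i, g, hg⟩ := exists_factor_directLimit (e.symm.toLinearMap ∘ₗ h)
        refine ⟨DirectSum.lof R ι _ i ∘ₗ g, LinearMap.ext fun p => ?_⟩
        have := LinearMap.congr_fun hg p
        simp only [LinearMap.comp_apply] at this
        simp [π, this]
    -- Surjectivity is the lifting property for `R` itself.
    refine ⟨ι, G, inferInstance, hC, π, fun m => ?_, hlift⟩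
    obtain ⟨g, hg⟩ := hlift R _ _ inferInstance (LinearMap.toSpanSingleton R M m)
    exact ⟨g 1, by simpa using LinearMap.congr_fun hg 1⟩
  · rintro ⟨ι, Cf, _, hC, f, hf, hlift⟩
    cases isEmpty_or_nonempty ι
    · -- An empty direct sum is zero, so `M` is the direct limit of the empty system.
      have : Subsingleton M := hf.subsingleton
      let g : ∀ i j : PEmpty, i ≤ j →
          ((i.elim : ModuleCat.{0} R) : Type) →ₗ[R] ((j.elim : ModuleCat.{0} R) : Type) :=
        fun i => i.elim
      have : Subsingleton (Module.DirectLimit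
        (fun i : PEmpty => ((i.elim : ModuleCat.{0} R) : Type)) g) := inferInstance
      exact ⟨{ ι := PEmpty, dec := inferInstance, directed := ⟨fun i => i.elim⟩,
               G := fun i => i.elim, f := g,
               system := ⟨fun i => i.elim, fun i => i.elim⟩, memC := fun i => i.elim,
               equiv := default }⟩
    · refine SumOver.inLim (Cf := Cf) ?_ hfp (iteratedSum_mem hsum hC)
      intro P _ _ hP h
      obtain ⟨g, rfl⟩ := hlift P _ _ hP h
      obtain ⟨t, u, v, rfl⟩ := exists_factor_directSum g
      exact ⟨⟨t, f ∘ₗ v⟩, u, rfl⟩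
end

section
/- Let A be a left hereditary and right noetherian ring, and let C be a class of finitely presented left A-modules closed under extensions and direct summands with A ∈ C. Then C is covariantly finite in the category A-mod of finitely presented left A-modules. -/
/-!
A left hereditary ring makes `C` closed under finitely generated submodules
(`ExtSummandClosed.of_injective`). Hence, for a finitely presented module `M`, the image of any
map from `M` to a member of `C` is itself in `C`, and the quotients of `M` lying in `C` are closed
under finite subdirect products. A left approximation of `M` is therefore obtained as `M → M / K`
as soon as there is a smallest submodule `K` with `M / K ∈ C`.

Write `M = Aⁿ / L₀` with `L₀` finitely generated, and `X*` for the right module `Hom_A(X, A)`.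
Submodules `K` correspond to submodules `L` between `L₀` and `Aⁿ`. Splitting off a projective
summand, every `L` with `Aⁿ / L ∈ C` can be shrunk to one with `(L / L₀)* = 0`, still with
quotient in `C` (`exists_dualTrivial`). For such `L` restriction embeds `L*` into `L₀*`, which is a
noetherian right module, and `L` gets smaller as the image of `L*` in `L₀*` gets larger. As
finitely generated projective modules are determined by their duals, equal images force equal
submodules (`le_of_extendable_le`). The `L` with maximal image is thus the smallest
(`exists_smallest`).
-/

open CategoryTheory

/-- The class `C` is covariantly finite in the category of finitely presented
`A`-modules: every finitely presented module has a left `C`-approximation. -/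
def CovariantlyFinite (A : Type) [Ring A] (C : ModuleCat.{0} A → Prop) : Prop :=
  ∀ (M : Type) (_ : AddCommGroup M) (_ : Module A M), Module.FinitePresentation A M →
    ∃ C₀, C C₀ ∧ ∃ g : M →ₗ[A] (C₀ : Type),
      ∀ C', C C' → ∀ h : M →ₗ[A] (C' : Type),
        ∃ k : (C₀ : Type) →ₗ[A] (C' : Type), k.comp g = h

/-! ### Submodules of finite free modules over a left hereditary ring -/

/-- An extension of a projective module by a projective module is projective. -/
lemma projective_of_ker {A : Type} [Ring A] {N P : Type} [AddCommGroup N] [Module A N]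
    [AddCommGroup P] [Module A P] (f : N →ₗ[A] P) (hf : Function.Surjective f)
    [Module.Projective A P] (hk : Module.Projective A (LinearMap.ker f)) :
    Module.Projective A N := by
  obtain ⟨s, hs⟩ := Module.projective_lifting_property f LinearMap.id hf
  have hs' : ∀ x, f (s x) = x := fun x => LinearMap.congr_fun hs x
  let r : N →ₗ[A] LinearMap.ker f :=
    (LinearMap.id - s.comp f).codRestrict _ (fun x => by simp [hs'])
  refine Module.Projective.of_split (M := LinearMap.ker f × P) (r.prod f)
    ((LinearMap.ker f).subtype.coprod s) ?_
  ext x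
  simp [r]

/-- Over a left hereditary ring every submodule of a finite free module is projective. -/
lemma projective_submodule {A : Type} [Ring A]
    (hhered : ∀ I : Ideal A, Module.Projective A I) (n : ℕ) :
    ∀ N : Submodule A (Fin n → A), Module.Projective A N := by
  induction n with
  | zero =>
    intro N
    infer_instance
  | succ n ih =>
    intro N
    let g : N →ₗ[A] A := (LinearMap.proj 0).comp N.subtype
    have : Module.Projective A (LinearMap.range g) := hhered _
    refine projective_of_ker g.rangeRestrict g.surjective_rangeRestrict ?_
    -- The kernel of the first coordinate embeds into the free module on the other coordinates.
    let t : LinearMap.ker g.rangeRestrict →ₗ[A] (Fin n → A) :=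
      (LinearMap.funLeft A A Fin.succ).comp (N.subtype.comp (Submodule.subtype _))
    have ht : Function.Injective t := by
      rintro ⟨⟨x, hx⟩, hx'⟩ ⟨⟨y, hy⟩, hy'⟩ h
      have h0 : x 0 = y 0 :=
        (show x 0 = 0 by simpa [g] using hx').trans (show y 0 = 0 by simpa [g] using hy').symm
      have h1 : ∀ i : Fin n, x i.succ = y i.succ := fun i => congr_fun h i
      exact Subtype.ext (Subtype.ext (funext (Fin.cases h0 h1)))
    have := ih (LinearMap.range t)
    exact Module.Projective.of_equiv (LinearEquiv.ofInjective t ht).symm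

/-! ### Duals of finitely generated modules over a right noetherian ring -/

/-- Restriction of linear forms along `f`, as a map of right `A`-modules `Y* → X*`. -/
def dualRestrict {A : Type} [Ring A] {X Y : Type} [AddCommGroup X] [Module A X]
    [AddCommGroup Y] [Module A Y] (f : X →ₗ[A] Y) :
    (Y →ₗ[A] A) →ₗ[Aᵐᵒᵖ] (X →ₗ[A] A) where
  toFun φ := φ.comp f
  map_add' _ _ := rfl
  map_smul' _ _ := rfl

/-- Over a right noetherian ring the dual of a finitely generated left module is a
noetherian right module: it embeds into a finite power of `A` by evaluation at generators. -/
lemma isNoetherian_dual {A : Type} [Ring A] (hnoeth : IsNoetherianRing Aᵐᵒᵖ)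
    (X : Type) [AddCommGroup X] [Module A X] [Module.Finite A X] :
    IsNoetherian Aᵐᵒᵖ (X →ₗ[A] A) := by
  let e : Aᵐᵒᵖ →ₗ[Aᵐᵒᵖ] A :=
    { toFun := MulOpposite.unop, map_add' := fun _ _ => rfl, map_smul' := fun _ _ => rfl }
  have : IsNoetherian Aᵐᵒᵖ Aᵐᵒᵖ := hnoeth
  have : IsNoetherian Aᵐᵒᵖ A :=
    isNoetherian_of_surjective (f := e) (LinearMap.range_eq_top.2 MulOpposite.unop_surjective)
  obtain ⟨n, b, hb⟩ := Module.Finite.exists_fin (R := A) (M := X)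
  let ev : (X →ₗ[A] A) →ₗ[Aᵐᵒᵖ] (Fin n → A) :=
    { toFun := fun φ i => φ (b i), map_add' := fun _ _ => rfl, map_smul' := fun _ _ => rfl }
  refine isNoetherian_of_injective ev ?_
  intro φ ψ h
  exact LinearMap.ext_on_range hb (fun i => congr_fun h i)

/-! ### Classes closed under extensions and direct summands -/

/-- A class `C` of finitely presented modules that contains `A` and is closed under
extensions and direct summands. -/
structure ExtSummandClosed (A : Type) [Ring A] (C : ModuleCat.{0} A → Prop) : Prop where
  fp : ∀ N, C N → Module.FinitePresentation A N
  self : C (ModuleCat.of A A)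
  ext : ∀ (N₁ N N₂ : ModuleCat.{0} A), C N₁ → C N₂ →
      ∀ (i : (N₁ : Type) →ₗ[A] (N : Type)) (p : (N : Type) →ₗ[A] (N₂ : Type)),
        Function.Injective i → Function.Surjective p → Function.Exact i p → C N
  summand : ∀ (N N' : ModuleCat.{0} A), C N →
      ∀ (p : (N : Type) →ₗ[A] (N' : Type)) (s : (N' : Type) →ₗ[A] (N : Type)),
        p.comp s = LinearMap.id → C N'

namespace ExtSummandClosed

variable {A : Type} [Ring A] {C : ModuleCat.{0} A → Prop}
  {X Y Z : Type} [AddCommGroup X] [Module A X] [AddCommGroup Y] [Module A Y]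
  [AddCommGroup Z] [Module A Z]

lemma of_split (hC : ExtSummandClosed A C) (hX : C (ModuleCat.of A X)) (p : X →ₗ[A] Y)
    (s : Y →ₗ[A] X) (h : p.comp s = LinearMap.id) : C (ModuleCat.of A Y) :=
  hC.summand (ModuleCat.of A X) (ModuleCat.of A Y) hX p s h

lemma of_exact (hC : ExtSummandClosed A C) (hX : C (ModuleCat.of A X))
    (hZ : C (ModuleCat.of A Z)) (i : X →ₗ[A] Y) (p : Y →ₗ[A] Z) (hi : Function.Injective i)
    (hp : Function.Surjective p) (h : Function.Exact i p) : C (ModuleCat.of A Y) :=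
  hC.ext (ModuleCat.of A X) (ModuleCat.of A Y) (ModuleCat.of A Z) hX hZ i p hi hp h

lemma of_equiv (hC : ExtSummandClosed A C) (hX : C (ModuleCat.of A X)) (e : X ≃ₗ[A] Y) :
    C (ModuleCat.of A Y) :=
  hC.of_split hX e.toLinearMap e.symm.toLinearMap (by ext; simp)

lemma of_subsingleton (hC : ExtSummandClosed A C) [Subsingleton Y] : C (ModuleCat.of A Y) :=
  hC.of_split hC.self 0 0 (by ext; exact Subsingleton.elim _ _)

lemma prod (hC : ExtSummandClosed A C) (hX : C (ModuleCat.of A X))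
    (hY : C (ModuleCat.of A Y)) : C (ModuleCat.of A (X × Y)) :=
  hC.of_exact hX hY (LinearMap.inl A X Y) (LinearMap.snd A X Y) LinearMap.inl_injective
    LinearMap.snd_surjective Function.Exact.inl_snd

lemma free (hC : ExtSummandClosed A C) (n : ℕ) : C (ModuleCat.of A (Fin n → A)) := by
  induction n with
  | zero => exact hC.of_subsingleton
  | succ n ih => exact hC.of_equiv (hC.prod hC.self ih) (Fin.consLinearEquiv A (fun _ => A))

/-- Over a left hereditary ring, `C` is closed under finitely generated submodules.
For `Y ⊆ X` with `X ∈ C`, take a surjection `q : Aⁿ → Y` with kernel `K`. Since `Ext²` vanishes,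
the class of `0 → K → Aⁿ → Y → 0` lifts to an extension `0 → K → E → X → 0`, and then
`0 → Aⁿ → E ⊕ Y → X → 0` is exact. So `E ⊕ Y ∈ C`, hence `Y ∈ C`. -/
lemma of_injective (hC : ExtSummandClosed A C)
    (hhered : ∀ I : Ideal A, Module.Projective A I) (hX : C (ModuleCat.of A X))
    [Module.Finite A Y] (j : Y →ₗ[A] X) (hj : Function.Injective j) :
    C (ModuleCat.of A Y) := by
  have : Module.FinitePresentation A X := hC.fp _ hX
  obtain ⟨m, p, hp⟩ := Module.Finite.exists_fin' A X
  obtain ⟨n, q, hq⟩ := Module.Finite.exists_fin' A Y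
  let G : Submodule A (Fin m → A) := (LinearMap.range j).comap p
  have : Module.Projective A G := projective_submodule hhered m G
  let w : G →ₗ[A] Y := (LinearEquiv.ofInjective j hj).symm.toLinearMap.comp
    (p.restrict (p := G) (q := LinearMap.range j) (fun _ h => h))
  have hw : ∀ x : G, j (w x) = p x := by
    intro x
    have := LinearEquiv.apply_symm_apply (LinearEquiv.ofInjective j hj)
      (p.restrict (p := G) (q := LinearMap.range j) (fun _ h => h) x)
    exact congrArg Subtype.val this
  obtain ⟨u, hu⟩ := Module.projective_lifting_property q w hq
  have hu' : ∀ x, q (u x) = w x := fun x => LinearMap.congr_fun hu x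
  -- `E` is the pushout of `Aⁿ ← G → Aᵐ`, where `G` is the preimage of `Y` under `Aᵐ → X`.
  let R : G →ₗ[A] (Fin n → A) × (Fin m → A) := u.prod (-G.subtype)
  let π : (((Fin n → A) × (Fin m → A)) ⧸ LinearMap.range R) →ₗ[A] X :=
    (LinearMap.range R).liftQ ((j.comp q).coprod p) (by
      rintro _ ⟨x, rfl⟩
      simp [R, hu', hw])
  let ι : (Fin n → A) →ₗ[A] (((Fin n → A) × (Fin m → A)) ⧸ LinearMap.range R) :=
    (LinearMap.range R).mkQ.comp (LinearMap.inl A _ _)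
  have hπ : ∀ a b, π ((LinearMap.range R).mkQ (a, b)) = j (q a) + p b := by
    intro a b
    simp [π]
  have hι : Function.Injective ι := by
    rw [← LinearMap.ker_eq_bot, LinearMap.ker_eq_bot']
    intro a ha
    have : ((a, 0) : (Fin n → A) × (Fin m → A)) ∈ LinearMap.range R := by
      simpa [ι] using ha
    obtain ⟨x, hx⟩ := this
    have h2 : x = 0 := by
      have := congrArg Prod.snd hx
      simpa [R] using this
    have h1 := congrArg Prod.fst hx
    simpa [R, h2] using h1.symm
  have key := hC.of_exact (hC.free n) hX (ι.prod q) (π.coprod (-j))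
    (fun a b h => hι (congrArg Prod.fst h))
    (by
      intro x
      obtain ⟨b, rfl⟩ := hp x
      refine ⟨((LinearMap.range R).mkQ (0, b), 0), ?_⟩
      simp only [LinearMap.coprod_apply, hπ]
      simp)
    (by
      rintro ⟨e, y⟩
      obtain ⟨⟨a, b⟩, rfl⟩ := (LinearMap.range R).mkQ_surjective e
      simp only [LinearMap.coprod_apply, hπ]
      constructor
      · intro h
        have h' : j y = j (q a) + p b := by
          rw [LinearMap.neg_apply, ← sub_eq_add_neg, sub_eq_zero] at h
          exact h.symm
        have hb : b ∈ G := ⟨y - q a, by simp [h']⟩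
        have hy : y = q a + w ⟨b, hb⟩ := hj (by rw [map_add, hw, h'])
        refine ⟨a + u ⟨b, hb⟩, Prod.ext ?_ ?_⟩
        · change (LinearMap.range R).mkQ (a + u ⟨b, hb⟩, 0) = (LinearMap.range R).mkQ (a, b)
          rw [← sub_eq_zero, ← map_sub, ← LinearMap.mem_ker, Submodule.ker_mkQ]
          exact ⟨⟨b, hb⟩, by simp [R]⟩
        · simp [hy, hu']
      · rintro ⟨c, hc⟩
        have h1 : π (ι c) = π ((LinearMap.range R).mkQ (a, b)) :=
          congrArg π (congrArg Prod.fst hc)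
        have h2 : q c = y := congrArg Prod.snd hc
        have h3 : π (ι c) = j (q c) + p 0 := hπ c 0
        rw [hπ] at h1
        rw [← h1, h3, h2]
        simp)
  exact hC.of_split key (LinearMap.snd A _ _) (LinearMap.inr A _ _) (by ext; simp)

end ExtSummandClosed

/-! ### A smallest submodule with quotient in the class -/

section Minimal

variable {A : Type} [Ring A] {C : ModuleCat.{0} A → Prop} {n : ℕ}

/-- `L` contains `L₀` and every linear form on `L` vanishing on `L₀` is zero, that is,
`(L / L₀)* = 0`. -/
def DualTrivial (L₀ L : Submodule A (Fin n → A)) : Prop :=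
  L₀ ≤ L ∧ ∀ φ : L →ₗ[A] A, (∀ x : L, (x : Fin n → A) ∈ L₀ → φ x = 0) → φ = 0

lemma fg_of_quotient_mem (hC : ExtSummandClosed A C) (L : Submodule A (Fin n → A))
    (hL : C (ModuleCat.of A ((Fin n → A) ⧸ L))) : Module.Finite A L := by
  have : Module.FinitePresentation A ((Fin n → A) ⧸ L) := hC.fp _ hL
  have := Module.FinitePresentation.fg_ker L.mkQ L.mkQ_surjective
  rw [Submodule.ker_mkQ] at this
  exact Module.Finite.of_fg this

/-- Every `L` with quotient in `C` can be shrunk to a dual-trivial one with quotient in `C`: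
the common kernel `L'` of the linear forms on `L` vanishing on `L₀` is cut out by finitely many
of them, so `L / L'` is a finitely generated submodule of a finite free module. It is
therefore projective, so `L'` is a summand of `L` and linear forms on `L'` extend to `L`. -/
lemma exists_dualTrivial (hhered : ∀ I : Ideal A, Module.Projective A I)
    (hnoeth : IsNoetherianRing Aᵐᵒᵖ) (hC : ExtSummandClosed A C)
    (L₀ L : Submodule A (Fin n → A)) (hle : L₀ ≤ L)
    (hL : C (ModuleCat.of A ((Fin n → A) ⧸ L))) :
    ∃ L', L' ≤ L ∧ DualTrivial L₀ L' ∧ C (ModuleCat.of A ((Fin n → A) ⧸ L')) := by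
  have := fg_of_quotient_mem hC L hL
  have := isNoetherian_dual hnoeth L
  let V : Submodule Aᵐᵒᵖ (L →ₗ[A] A) :=
    LinearMap.ker (dualRestrict (Submodule.inclusion hle))
  have hV : ∀ φ, φ ∈ V ↔ ∀ x : L, (x : Fin n → A) ∈ L₀ → φ x = 0 := by
    intro φ
    constructor
    · intro h x hx
      exact LinearMap.congr_fun (show φ.comp (Submodule.inclusion hle) = 0 from h) ⟨x, hx⟩
    · intro h
      change φ.comp (Submodule.inclusion hle) = 0
      ext x
      exact h (Submodule.inclusion hle x) x.2
  obtain ⟨k, φ, hφ⟩ := Submodule.fg_iff_exists_fin_generating_family.mp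
    (IsNoetherian.noetherian V)
  have hφV : ∀ i, φ i ∈ V := fun i => hφ ▸ Submodule.subset_span ⟨i, rfl⟩
  let Φ : L →ₗ[A] (Fin k → A) := LinearMap.pi φ
  have hΦ : ∀ ψ ∈ V, ∀ x, Φ x = 0 → ψ x = 0 := by
    intro ψ hψ x hx
    rw [← hφ] at hψ
    induction hψ using Submodule.span_induction with
    | mem ψ h =>
      obtain ⟨i, rfl⟩ := h
      exact congr_fun hx i
    | zero => rfl
    | add a b _ _ ha hb => simp [ha, hb]
    | smul r a _ ha => simp [ha]
  let L' : Submodule A (Fin n → A) := (LinearMap.ker Φ).map L.subtype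
  have hmem : ∀ x : L, (x : Fin n → A) ∈ L' ↔ Φ x = 0 := by
    intro x
    simp [L']
  have hL'L : L' ≤ L := Submodule.map_subtype_le _ _
  have hL₀ : L₀ ≤ L' := by
    intro x hx
    refine (hmem ⟨x, hle hx⟩).2 ?_
    funext i
    exact (hV _).1 (hφV i) _ hx
  refine ⟨L', hL'L, ⟨hL₀, ?_⟩, ?_⟩
  · intro ψ hψ
    have : Module.Projective A (LinearMap.range Φ) := projective_submodule hhered k _
    obtain ⟨s, hs⟩ := Module.projective_lifting_property Φ.rangeRestrict LinearMap.id
      Φ.surjective_rangeRestrict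
    have hs' : ∀ y, Φ (s y) = y := fun y => congrArg Subtype.val (LinearMap.congr_fun hs y)
    let r : L →ₗ[A] L' := (L.subtype.comp (LinearMap.id - s.comp Φ.rangeRestrict)).codRestrict L'
      (fun x => (hmem _).2 (by simp [hs']))
    have hr : ∀ x : L', r (Submodule.inclusion hL'L x) = x := by
      intro x
      have h0 : Φ.rangeRestrict (Submodule.inclusion hL'L x) = 0 :=
        Subtype.ext ((hmem _).1 x.2)
      apply Subtype.ext
      change ((Submodule.inclusion hL'L x - s (Φ.rangeRestrict (Submodule.inclusion hL'L x)) : L) :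
        Fin n → A) = x
      rw [h0, map_zero, sub_zero]
      rfl
    have hext : ψ.comp r ∈ V := by
      rw [hV]
      intro x hx
      have : x = Submodule.inclusion hL'L ⟨x, hL₀ hx⟩ := rfl
      rw [LinearMap.comp_apply, this, hr]
      exact hψ _ hx
    ext x
    have := hΦ _ hext (Submodule.inclusion hL'L x) ((hmem _).1 x.2)
    rwa [LinearMap.comp_apply, hr] at this
  · -- `L / L'` is the image of `Φ`, and `Aⁿ / L'` is an extension of `Aⁿ / L` by it.
    have hker : LinearMap.ker Φ ≤ LinearMap.ker (L'.mkQ.comp L.subtype) := by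
      intro x hx
      simpa using (hmem x).2 hx
    have hker' : LinearMap.ker (L'.mkQ.comp L.subtype) = LinearMap.ker Φ := by
      refine le_antisymm ?_ hker
      intro x hx
      exact (hmem x).1 (by simpa using hx)
    have hR : C (ModuleCat.of A (LinearMap.range Φ)) :=
      hC.of_injective hhered (hC.free k) (LinearMap.range Φ).subtype Subtype.val_injective
    have hQ : C (ModuleCat.of A (LinearMap.range (L'.mkQ.comp L.subtype))) :=
      hC.of_equiv hR ((Φ.quotKerEquivRange.symm.trans
        (Submodule.quotEquivOfEq _ _ hker'.symm)).trans
        (L'.mkQ.comp L.subtype).quotKerEquivRange)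
    refine hC.of_exact hQ hL (Submodule.subtype _) (Submodule.factor hL'L)
      Subtype.val_injective (Submodule.factor_surjective hL'L) ?_
    intro y
    obtain ⟨y, rfl⟩ := L'.mkQ_surjective y
    constructor
    · intro h
      have hy : y ∈ L := by simpa using h
      exact ⟨⟨_, ⟨⟨y, hy⟩, rfl⟩⟩, rfl⟩
    · rintro ⟨⟨_, ⟨x, rfl⟩⟩, hx⟩
      rw [← hx]
      simp

/-- The submodule of `L₀*` formed by the linear forms that extend to `L`. -/
def extendable {L₀ L : Submodule A (Fin n → A)} (h : L₀ ≤ L) :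
    Submodule Aᵐᵒᵖ (L₀ →ₗ[A] A) :=
  LinearMap.range (dualRestrict (Submodule.inclusion h))

/-- A dual-trivial submodule is determined, among the larger ones, by the linear forms on `L₀`
that extend to it. If `L' ≤ L` have the same extendable forms, then a dual basis of the
finitely generated projective module `L'` extends to `L` and gives a retraction `L → L'`. Its
difference with the identity vanishes on `L₀`, hence everywhere. -/
lemma le_of_extendable_le (hhered : ∀ I : Ideal A, Module.Projective A I)
    {L₀ L L' : Submodule A (Fin n → A)} (hL : DualTrivial L₀ L) (hL' : DualTrivial L₀ L')
    (hfin : Module.Finite A L') (hle : L' ≤ L)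
    (hext : extendable hL'.1 ≤ extendable hL.1) : L ≤ L' := by
  have : Module.Projective A L' := projective_submodule hhered n L'
  obtain ⟨k, f, g, _, _, hfg⟩ := Module.Finite.exists_comp_eq_id_of_projective A L'
  have hfg' : ∀ x, f (g x) = x := fun x => LinearMap.congr_fun hfg x
  have hφ : ∀ φ : L' →ₗ[A] A, ∃ ψ : L →ₗ[A] A, ψ.comp (Submodule.inclusion hle) = φ := by
    intro φ
    obtain ⟨ψ, hψ⟩ := hext ⟨φ, rfl⟩
    refine ⟨ψ, ?_⟩
    rw [← sub_eq_zero]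
    refine hL'.2 _ (fun x hx => ?_)
    have : ψ (Submodule.inclusion hle x) = φ x := LinearMap.congr_fun hψ ⟨x, hx⟩
    simp [this]
  choose ψ hψ using fun i => hφ ((LinearMap.proj i).comp g)
  let r : L →ₗ[A] L' := f.comp (LinearMap.pi ψ)
  have hr : ∀ x : L', r (Submodule.inclusion hle x) = x := by
    intro x
    have : LinearMap.pi ψ (Submodule.inclusion hle x) = g x :=
      funext fun i => LinearMap.congr_fun (hψ i) x
    rw [LinearMap.comp_apply, this, hfg']
  have hd : L'.subtype.comp r - L.subtype = 0 := by
    ext x i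
    refine LinearMap.congr_fun
      (hL.2 ((LinearMap.proj i).comp (L'.subtype.comp r - L.subtype)) fun y hy => ?_) x
    have h1 : y = Submodule.inclusion hle ⟨y, hL'.1 hy⟩ := rfl
    have h2 : (r y : Fin n → A) = y := by
      rw [h1, hr]
      rfl
    simp [h2]
  intro x hx
  have : (r ⟨x, hx⟩ : Fin n → A) = x := by
    simpa [sub_eq_zero] using LinearMap.congr_fun hd ⟨x, hx⟩
  rw [← this]
  exact (r ⟨x, hx⟩).2

lemma quotient_inf_mem (hhered : ∀ I : Ideal A, Module.Projective A I)
    (hC : ExtSummandClosed A C) (L₁ L₂ : Submodule A (Fin n → A))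
    (h₁ : C (ModuleCat.of A ((Fin n → A) ⧸ L₁))) (h₂ : C (ModuleCat.of A ((Fin n → A) ⧸ L₂))) :
    C (ModuleCat.of A ((Fin n → A) ⧸ (L₁ ⊓ L₂))) := by
  refine hC.of_injective hhered (hC.prod h₁ h₂)
    ((L₁ ⊓ L₂).liftQ (L₁.mkQ.prod L₂.mkQ) (by simp [LinearMap.ker_prod])) ?_
  rw [← LinearMap.ker_eq_bot, Submodule.ker_liftQ_eq_bot']
  simp [LinearMap.ker_prod]

/-- Among the submodules of `Aⁿ` containing the finitely generated submodule `L₀` and having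
quotient in `C` there is a smallest one. -/
lemma exists_smallest (hhered : ∀ I : Ideal A, Module.Projective A I)
    (hnoeth : IsNoetherianRing Aᵐᵒᵖ) (hC : ExtSummandClosed A C)
    (L₀ : Submodule A (Fin n → A)) (hfg : L₀.FG) :
    ∃ L, L₀ ≤ L ∧ C (ModuleCat.of A ((Fin n → A) ⧸ L)) ∧
      ∀ L₁, L₀ ≤ L₁ → C (ModuleCat.of A ((Fin n → A) ⧸ L₁)) → L ≤ L₁ := by
  have : Module.Finite A L₀ := Module.Finite.of_fg hfg
  have := isNoetherian_dual hnoeth L₀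
  let S : Set (Submodule Aᵐᵒᵖ (L₀ →ₗ[A] A)) :=
    {R | ∃ L, ∃ h : DualTrivial L₀ L, C (ModuleCat.of A ((Fin n → A) ⧸ L)) ∧
      R = extendable h.1}
  have hS : S.Nonempty := by
    obtain ⟨L, _, h, hL⟩ := exists_dualTrivial hhered hnoeth hC L₀ ⊤ le_top hC.of_subsingleton
    exact ⟨_, L, h, hL, rfl⟩
  obtain ⟨_, ⟨L, h, hL, rfl⟩, hmax⟩ :=
    set_has_maximal_iff_noetherian.mpr (inferInstance : IsNoetherian Aᵐᵒᵖ (L₀ →ₗ[A] A)) S hS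
  refine ⟨L, h.1, hL, fun L₁ h₁ hL₁ => ?_⟩
  obtain ⟨L', hle, h', hL'⟩ := exists_dualTrivial hhered hnoeth hC L₀ (L ⊓ L₁)
    (le_inf h.1 h₁) (quotient_inf_mem hhered hC L L₁ hL hL₁)
  have hle' : L' ≤ L := hle.trans inf_le_left
  have hmono : extendable h.1 ≤ extendable h'.1 := by
    rintro _ ⟨φ, rfl⟩
    exact ⟨φ.comp (Submodule.inclusion hle'), rfl⟩
  have heq : extendable h'.1 ≤ extendable h.1 := by
    by_contra hn
    exact hmax _ ⟨L', h', hL', rfl⟩ (lt_of_le_not_ge hmono hn)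
  exact (le_of_extendable_le hhered h h' (fg_of_quotient_mem hC L' hL') hle' heq).trans
    (hle.trans inf_le_right)

end Minimal

/-- Let `A` be a left hereditary and right noetherian ring, and `C` a
class of finitely presented left `A`-modules closed under extensions and direct summands
with `A ∈ C`.  Then `C` is covariantly finite in the category of finitely presented
`A`-modules. -/
theorem covariantlyFinite_of_hereditary_noetherian
    (A : Type) [Ring A]
    (hhered : ∀ I : Ideal A, Module.Projective A I)
    (hnoeth : IsNoetherianRing Aᵐᵒᵖ)
    (C : ModuleCat.{0} A → Prop)
    (hfp : ∀ N, C N → Module.FinitePresentation A N)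
    (hA : C (ModuleCat.of A A))
    (hext : ∀ (N₁ N N₂ : ModuleCat.{0} A), C N₁ → C N₂ →
      ∀ (i : (N₁ : Type) →ₗ[A] (N : Type)) (p : (N : Type) →ₗ[A] (N₂ : Type)),
        Function.Injective i → Function.Surjective p → Function.Exact i p → C N)
    (hsummand : ∀ (N N' : ModuleCat.{0} A), C N →
      ∀ (p : (N : Type) →ₗ[A] (N' : Type)) (s : (N' : Type) →ₗ[A] (N : Type)),
        p.comp s = LinearMap.id → C N') :
    CovariantlyFinite A C := by
  have hC : ExtSummandClosed A C := ⟨hfp, hA, hext, hsummand⟩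
  intro M _ _ hM
  obtain ⟨n, L₀, e, hfg⟩ := Module.FinitePresentation.exists_fin A M
  obtain ⟨L, hle, hL, hmin⟩ := exists_smallest hhered hnoeth hC L₀ hfg
  refine ⟨ModuleCat.of A ((Fin n → A) ⧸ L), hL,
    (Submodule.factor hle).comp e.toLinearMap, fun C' hC' h => ?_⟩
  let t : (Fin n → A) →ₗ[A] (C' : Type) := (h.comp e.symm.toLinearMap).comp L₀.mkQ
  have ht : L ≤ LinearMap.ker t := by
    refine hmin _ (fun x hx => ?_) ?_
    · have : L₀.mkQ x = 0 := by simpa using hx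
      rw [LinearMap.mem_ker, LinearMap.comp_apply, this, map_zero]
    · have hr : C (ModuleCat.of A (LinearMap.range t)) :=
        hC.of_injective (X := C') hhered hC' (LinearMap.range t).subtype Subtype.val_injective
      exact hC.of_equiv hr t.quotKerEquivRange.symm
  refine ⟨L.liftQ t ht, ?_⟩
  ext x
  obtain ⟨y, hy⟩ := L₀.mkQ_surjective (e x)
  have hx : x = e.symm (L₀.mkQ y) := by rw [hy, e.symm_apply_apply]
  subst hx
  simp [t]
end

section
/- Let A be a ring such that every right A-module is finendo (finitely generated over its endomorphism ring). Then A is left pure-semisimple. -/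
open CategoryTheory DirectSum

/-- A ring `A` is left pure-semisimple if every left `A`-module is a direct sum of
finitely presented modules. -/
def LeftPureSemisimple (A : Type) [Ring A] : Prop :=
  ∀ (M : Type) (_ : AddCommGroup M) (_ : Module A M),
    ∃ (ι : Type) (_ : DecidableEq ι) (G : ι → ModuleCat.{0} A),
      (∀ i, Module.FinitePresentation A (G i)) ∧
        Nonempty ((⨁ i, (G i : Type)) ≃ₗ[A] M)

/-!
Suppose every right `A`-module is finitely generated over its endomorphism ring.

* `A` is right artinian (`isArtinianRing`). If a direct sum `⨁ Qᵢ` is finendo, finitely many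
  elements of the `Qᵢ` already detect the annihilator of the whole sum. For the sum of all simple
  modules this makes `A / J` semisimple; for the sum of the `A / Jⁿ` it makes the powers of `J`
  stationary; for suitable modules with simple essential socle it embeds `A / I`, for any two-sided
  ideal `I`, into a finite product of such modules. The last fact makes `J` nilpotent and makes the
  successive quotients of the annihilators of the `Jⁱ` artinian.
* Every sequence `⋯ → D₂ → D₁ → D₀` of radical maps between artinian right modules has a zero
  composite (`exists_comp_eq_zero_of_isRad`). Passing to stable images, all maps may be assumed
  surjective; if all `Dₙ` were nonzero, finiteness of `⨁ Dₙ` over its endomorphism ring, together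
  with Nakayama's lemma over `End Dₙ`, would give a contradiction.
* Finitely presented left modules are handled through their presentations `f : F₁ → F₀` with
  `F₁`, `F₀` finitely generated free. Duality into `A` and the transpose turn chains of radical maps
  of presentations into chains of radical maps of artinian right modules. Hence on a nonzero left
  module `M` not every homomorphism from a finitely presented module can be factored again and again
  through radical maps (`exists_not_isRadMultiple`).
* Cutting down such a homomorphism by a minimal idempotent gives a nonzero `a : P → M`, with `P`
  finitely presented, such that every `t` through which `a` factors is a split monomorphism on `P`
  (`exists_split_state`). Applied to `M ⧸ N` for a proper pure submodule `N`, the map `a` lifts to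
  `M` by purity, and the splitting property shows that the lift is injective on `P`, that its image
  `F` meets `N` trivially and that `N ⊔ F` is again pure (`exists_pure_extension`).
* Zorn's lemma applied to independent families of finitely presented submodules with pure sum
  finishes the proof (`exists_decomposition`).
-/

namespace Finendo

/-! ### Finendo modules and artinian rings -/

section Artinian

variable {R : Type} [Ring R]

/-- Elements generating `M` over its endomorphism ring have the same annihilator in `R` as `M`. -/
theorem smul_eq_zero_of_gens {M : Type} [AddCommGroup M] [Module R M] {S : Set M}
    (hS : Submodule.span (Module.End R M) S = ⊤) {r : R} (h : ∀ s ∈ S, r • s = 0) (x : M) :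
    r • x = 0 := by
  have hx : x ∈ Submodule.span (Module.End R M) S := hS ▸ Submodule.mem_top
  induction hx using Submodule.span_induction with
  | mem s hs => exact h s hs
  | zero => simp
  | add x y _ _ hx hy => rw [smul_add, hx, hy, add_zero]
  | smul f x _ hx => rw [Module.End.smul_def, ← map_smul, hx, map_zero]

/-- Finitely many elements of the modules `Q i` detect the common annihilator of all the `Q i`,
because generators of `⨁ Q i` over its endomorphism ring have finite support. -/
theorem exists_test_elements
    (hfin : ∀ (M : Type) [AddCommGroup M] [Module R M], Module.Finite (Module.End R M) M)
    {ι : Type} (Q : ι → Type) [∀ i, AddCommGroup (Q i)] [∀ i, Module R (Q i)] :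
    ∃ (K : Type) (_ : Finite K) (idx : K → ι) (y : ∀ k, Q (idx k)),
      ∀ r : R, (∀ k, r • y k = 0) → ∀ i (x : Q i), r • x = 0 := by
  classical
  obtain ⟨S, hS⟩ := (hfin (Π₀ i, Q i)).fg_top
  refine ⟨Σ s : S, {i // i ∈ s.1.support}, inferInstance, fun k => k.2.1, fun k => k.1.1 k.2.1,
    fun r hr i x => ?_⟩
  have h : ∀ s ∈ (S : Set (Π₀ i, Q i)), r • s = 0 := by
    intro s hs
    ext j
    by_cases hj : j ∈ s.support
    · exact hr ⟨⟨s, hs⟩, ⟨j, hj⟩⟩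
    · simp [DFinsupp.notMem_support_iff.mp hj]
  have := smul_eq_zero_of_gens hS h (DFinsupp.single i x)
  simpa using DFunLike.congr_fun this i

/-- For `N ⊇ I` maximal with respect to `b ∉ N`, the class of `b` generates a simple essential
submodule of `R ⧸ N`. -/
theorem exists_maximal_not_mem (I : Ideal R) {b : R} (hb : b ∉ I) :
    ∃ N : Ideal R, I ≤ N ∧ b ∉ N ∧ ∀ z : R ⧸ N, z ≠ 0 → ∃ a : R, a • z = N.mkQ b := by
  obtain ⟨N, hIN, hN⟩ := zorn_le_nonempty₀ {N : Ideal R | b ∉ N} (fun c hc hchain y hy => by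
    refine ⟨sSup c, ?_, fun z hz => le_sSup hz⟩
    intro h
    obtain ⟨N, hN, hbN⟩ := (Submodule.mem_sSup_of_directed ⟨y, hy⟩ hchain.directedOn).mp h
    exact hc hN hbN) I hb
  refine ⟨N, hIN, hN.prop, fun z hz => ?_⟩
  obtain ⟨r, rfl⟩ := N.mkQ_surjective z
  have hr : r ∉ N := fun h => hz (by simpa using h)
  have hbs : b ∈ N ⊔ Submodule.span R {r} := by
    by_contra h
    exact hr (hN.le_of_ge h le_sup_left
      (Submodule.mem_sup_right (Submodule.mem_span_singleton_self r)))
  obtain ⟨n, hn, t, ht, rfl⟩ := Submodule.mem_sup.mp hbs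
  obtain ⟨a, rfl⟩ := Submodule.mem_span_singleton.mp ht
  refine ⟨a, ?_⟩
  have : N.mkQ n = 0 := by simpa using hn
  rw [map_add, this, zero_add, map_smul]

theorem exists_mul_one_sub {j : R} (hj : j ∈ Ring.jacobson R) : ∃ u : R, u * (1 - j) = 1 := by
  rw [← Ideal.jacobson_bot, Ideal.mem_jacobson_iff] at hj
  obtain ⟨z, hz⟩ := hj (-1)
  refine ⟨z, ?_⟩
  have : z * -1 * j + z - 1 = 0 := by simpa using hz
  rw [sub_eq_zero] at this
  calc z * (1 - j) = z * -1 * j + z := by noncomm_ring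
    _ = 1 := this

theorem jacobson_smul_mkQ {N : Ideal R} {b : R} (hb : b ∉ N)
    (h : ∀ z : R ⧸ N, z ≠ 0 → ∃ a : R, a • z = N.mkQ b) {j : R} (hj : j ∈ Ring.jacobson R) :
    j • N.mkQ b = 0 := by
  by_contra hne
  obtain ⟨a, ha⟩ := h _ hne
  obtain ⟨u, hu⟩ := exists_mul_one_sub (Ideal.mul_mem_left _ a hj)
  apply hb
  have h1 : (1 - a * j) • N.mkQ b = 0 := by
    rw [sub_smul, one_smul, mul_smul, ha, sub_self]
  have h2 : N.mkQ b = 0 := by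
    rw [← one_smul R (N.mkQ b), ← hu, mul_smul, h1, smul_zero]
  simpa using h2

/-- A two-sided ideal `I` is the annihilator of finitely many elements `y k`, each in a cyclic module
`R ⧸ N k` whose socle is simple and essential, generated by `c k`. -/
theorem exists_essential_family
    (hfin : ∀ (M : Type) [AddCommGroup M] [Module R M], Module.Finite (Module.End R M) M)
    (I : Ideal R) [I.IsTwoSided] :
    ∃ (K : Type) (_ : Finite K) (N : K → Ideal R) (c y : ∀ k, R ⧸ N k),
      (∀ k, c k ≠ 0) ∧ (∀ k (z : R ⧸ N k), z ≠ 0 → ∃ a : R, a • z = c k) ∧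
      (∀ k, ∀ j ∈ Ring.jacobson R, j • c k = 0) ∧
      ∀ r : R, r ∈ I ↔ ∀ k, r • y k = 0 := by
  choose N hIN hbN hN using fun b : {b : R // b ∉ I} => exists_maximal_not_mem I b.2
  obtain ⟨K, hK, idx, y, hy⟩ := exists_test_elements hfin (fun b => R ⧸ N b)
  refine ⟨K, hK, fun k => N (idx k), fun k => (N (idx k)).mkQ (idx k), y, fun k h => ?_,
    fun k z hz => hN _ z hz, fun k j hj => jacobson_smul_mkQ (hbN _) (hN _) hj,
    fun r => ⟨fun hr k => ?_, fun hr => ?_⟩⟩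
  · exact hbN _ (by simpa using h)
  · obtain ⟨s, hs⟩ := (N (idx k)).mkQ_surjective (y k)
    rw [← hs, ← map_smul]
    simpa using hIN _ (Ideal.IsTwoSided.mul_mem_of_left s hr)
  · by_contra hrI
    have := hy r hr ⟨r, hrI⟩ ((N ⟨r, hrI⟩).mkQ 1)
    rw [← map_smul] at this
    exact hbN ⟨r, hrI⟩ (by simpa using this)

/-- For a proper two-sided ideal `I`, the module `R ⧸ I` has a nonzero element annihilated by the
Jacobson radical. -/
theorem exists_jacobson_mul_mem
    (hfin : ∀ (M : Type) [AddCommGroup M] [Module R M], Module.Finite (Module.End R M) M)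
    (I : Ideal R) [I.IsTwoSided] (hI : I ≠ ⊤) :
    ∃ a ∉ I, ∀ j ∈ Ring.jacobson R, j * a ∈ I := by
  classical
  obtain ⟨K, hK, N, c, y, hc0, hc, hJ, hI'⟩ := exists_essential_family hfin I
  -- Multiply `a` successively so that each coordinate `a • y k`, `k ∈ F`, is pushed into the socle,
  -- keeping at least one coordinate nonzero.
  have key : ∀ F : Finset K, ∀ a : R, (∃ k ∈ F, a • y k ≠ 0) →
      ∃ a' : R, (∃ k ∈ F, (a' * a) • y k ≠ 0) ∧
        ∀ k ∈ F, ∀ j ∈ Ring.jacobson R, (j * (a' * a)) • y k = 0 := by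
    intro F
    induction F using Finset.induction_on with
    | empty => simp
    | insert k₀ F hk₀ ih =>
      intro a ha
      by_cases hF : ∃ k ∈ F, a • y k ≠ 0
      · obtain ⟨a₁, ⟨k₁, hk₁, hne⟩, h₁⟩ := ih a hF
        by_cases h0 : (a₁ * a) • y k₀ = 0
        · refine ⟨a₁, ⟨k₁, Finset.mem_insert_of_mem hk₁, hne⟩, fun k hk j hj => ?_⟩
          obtain rfl | hk := Finset.mem_insert.mp hk
          · rw [mul_smul, h0, smul_zero]
          · exact h₁ k hk j hj
        · obtain ⟨a₂, h₂⟩ := hc k₀ _ h0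
          refine ⟨a₂ * a₁, ⟨k₀, Finset.mem_insert_self _ _, ?_⟩, fun k hk j hj => ?_⟩
          · rw [mul_assoc, mul_smul, h₂]; exact hc0 _
          · obtain rfl | hk := Finset.mem_insert.mp hk
            · rw [mul_smul, mul_assoc, mul_smul a₂, h₂]; exact hJ _ j hj
            · rw [mul_assoc a₂, ← mul_assoc j]
              exact h₁ k hk _ (Ideal.IsTwoSided.mul_mem_of_left a₂ hj)
      · push Not at hF
        obtain ⟨k, hk, hne⟩ := ha
        obtain rfl | hk := Finset.mem_insert.mp hk
        · obtain ⟨a₂, h₂⟩ := hc k _ hne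
          refine ⟨a₂, ⟨k, Finset.mem_insert_self _ _, ?_⟩, fun k' hk' j hj => ?_⟩
          · rw [mul_smul, h₂]; exact hc0 _
          · obtain rfl | hk' := Finset.mem_insert.mp hk'
            · rw [mul_smul, mul_smul a₂, h₂]; exact hJ _ j hj
            · rw [mul_smul, mul_smul, hF _ hk', smul_zero, smul_zero]
        · exact absurd (hF k hk) hne
  have := Fintype.ofFinite K
  have h1 : ∃ k ∈ (Finset.univ : Finset K), (1 : R) • y k ≠ 0 := by
    by_contra h
    push Not at h
    exact hI ((Ideal.eq_top_iff_one I).mpr ((hI' 1).mpr fun k => h k (Finset.mem_univ k)))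
  obtain ⟨a, ⟨k, -, hk⟩, ha⟩ := key Finset.univ 1 h1
  rw [mul_one] at hk
  refine ⟨a, fun h => hk ((hI' a).mp h k), fun j hj => (hI' _).mpr fun k => ?_⟩
  simpa using ha k (Finset.mem_univ k) j hj

theorem isSemisimpleModule_of_jacobson_smul {M : Type} [AddCommGroup M] [Module R M]
    [IsSemisimpleRing (R ⧸ Ring.jacobson R)]
    (h : ∀ j ∈ Ring.jacobson R, ∀ x : M, j • x = 0) : IsSemisimpleModule R M := by
  have h' : Module.IsTorsionBySet R M (Ring.jacobson R) := fun x j => h j j.2 x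
  let _ := h'.module
  exact (h'.semilinearMap.isSemisimpleModule_iff_of_bijective Function.bijective_id).2
    inferInstance

theorem isSemisimpleRing_quotient_jacobson
    (hfin : ∀ (M : Type) [AddCommGroup M] [Module R M], Module.Finite (Module.End R M) M) :
    IsSemisimpleRing (R ⧸ Ring.jacobson R) := by
  obtain ⟨K, hK, idx, y, hy⟩ := exists_test_elements hfin
    (fun m : {m : Ideal R // m.IsMaximal} => R ⧸ m.1)
  have hs : ∀ k, IsSimpleModule R (R ⧸ (idx k).1) := fun k =>
    isSimpleModule_iff_isCoatom.mpr (idx k).2.out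
  let f : R →ₗ[R] ∀ k, R ⧸ (idx k).1 := LinearMap.pi fun k => LinearMap.toSpanSingleton R _ (y k)
  have hker : LinearMap.ker f ≤ Ring.jacobson R := by
    intro r hr
    rw [Ring.jacobson_eq_sInf_isMaximal, Submodule.mem_sInf]
    intro m hm
    have := hy r (fun k => congrFun (LinearMap.mem_ker.mp hr) k) ⟨m, hm⟩ (m.mkQ 1)
    rw [← map_smul] at this
    simpa using this
  have h1 : IsSemisimpleModule R (R ⧸ LinearMap.ker f) :=
    IsSemisimpleModule.of_injective (f.range.subtype ∘ₗ f.quotKerEquivRange.toLinearMap)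
      (Subtype.val_injective.comp f.quotKerEquivRange.injective)
  have h2 : IsSemisimpleModule R (R ⧸ Ring.jacobson R) :=
    IsSemisimpleModule.of_surjective (Submodule.factor hker) (Submodule.factor_surjective hker)
  have h' : Module.IsTorsionBySet R (R ⧸ Ring.jacobson R) (Ring.jacobson R) := by
    rw [Module.isTorsionBySet_quotient_iff]
    exact fun m i hi => Ideal.IsTwoSided.mul_mem_of_left m hi
  let g : (R ⧸ Ring.jacobson R) →ₛₗ[Ideal.Quotient.mk (Ring.jacobson R)] (R ⧸ Ring.jacobson R) :=
    { toFun := id, map_add' := fun _ _ => rfl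
      map_smul' := fun r x => by
        obtain ⟨x, rfl⟩ := Ideal.Quotient.mk_surjective x
        rfl }
  exact (g.isSemisimpleModule_iff_of_bijective Function.bijective_id).1 h2

/-- The powers of `J` become stationary, by testing on the modules `R ⧸ J ^ n`. If the stable value
`J ^ n` were nonzero, its right annihilator `T` would be proper, and `exists_jacobson_mul_mem` would
give `a ∉ T` with `J ^ n * a = J ^ (n + 1) * a = 0`, contradicting the definition of `T`. -/
theorem exists_jacobson_pow_eq_bot
    (hfin : ∀ (M : Type) [AddCommGroup M] [Module R M], Module.Finite (Module.End R M) M) :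
    ∃ n, Ring.jacobson R ^ n = ⊥ := by
  set J := Ring.jacobson R with hJ
  obtain ⟨K, hK, idx, y, hy⟩ := exists_test_elements hfin (fun n : ℕ => R ⧸ J ^ n)
  have := Fintype.ofFinite K
  obtain ⟨n, hn⟩ := (Set.finite_range idx).bddAbove
  have h1 : ∀ x ∈ J ^ n, ∀ i, x ∈ J ^ i := by
    intro x hx i
    have := hy x (fun k => ?_) i ((J ^ i).mkQ 1)
    · rw [← map_smul] at this
      simpa [-Submodule.mkQ_apply, ← LinearMap.mem_ker] using this
    · obtain ⟨s, hs⟩ := (J ^ (idx k)).mkQ_surjective (y k)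
      rw [← hs, ← map_smul]
      have : x * s ∈ J ^ (idx k) :=
        Ideal.IsTwoSided.mul_mem_of_left s (Ideal.pow_le_pow_right (hn ⟨k, rfl⟩) hx)
      rwa [smul_eq_mul, ← LinearMap.mem_ker, Submodule.ker_mkQ]
  let T : Ideal R :=
    { carrier := {a | ∀ x ∈ J ^ n, x * a = 0}
      add_mem' := fun ha hb x hx => by rw [mul_add, ha x hx, hb x hx, add_zero]
      zero_mem' := fun x _ => mul_zero x
      smul_mem' := fun r a ha x hx => by
        rw [smul_eq_mul, ← mul_assoc]
        exact ha _ (Ideal.IsTwoSided.mul_mem_of_left r hx) }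
  have hT : T.IsTwoSided := ⟨fun {a} b ha x hx => by rw [← mul_assoc, ha x hx, zero_mul]⟩
  by_cases hTop : T = ⊤
  · refine ⟨n, (Submodule.eq_bot_iff _).mpr fun x hx => ?_⟩
    have : (1 : R) ∈ T := hTop ▸ Submodule.mem_top
    simpa using this x hx
  · obtain ⟨a, haT, ha⟩ := exists_jacobson_mul_mem hfin T hTop
    refine absurd (fun x hx => ?_) haT
    have hx' : x ∈ J ^ n * J := by
      rw [← Submodule.pow_succ]; exact h1 x hx _
    exact Submodule.mul_induction_on hx' (fun u hu j hj => by rw [mul_assoc]; exact ha j hj u hu)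
      fun u v h1 h2 => by rw [add_mul, h1, h2, add_zero]

/-- The right annihilators `I i` of `J ^ i` form a finite filtration of `R`. The quotient
`I (i + 1) ⧸ I i` is killed by `J` and embeds into a finite product of simple socles. -/
theorem isArtinianRing
    (hfin : ∀ (M : Type) [AddCommGroup M] [Module R M], Module.Finite (Module.End R M) M) :
    IsArtinianRing R := by
  have hss := isSemisimpleRing_quotient_jacobson hfin
  obtain ⟨n, hn⟩ := exists_jacobson_pow_eq_bot hfin
  set J := Ring.jacobson R with hJ
  let I : ℕ → Ideal R := fun i =>
    { carrier := {a | ∀ x ∈ J ^ i, x * a = 0}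
      add_mem' := fun ha hb x hx => by rw [mul_add, ha x hx, hb x hx, add_zero]
      zero_mem' := fun x _ => mul_zero x
      smul_mem' := fun r a ha x hx => by
        rw [smul_eq_mul, ← mul_assoc]
        exact ha _ (Ideal.IsTwoSided.mul_mem_of_left r hx) }
  have hI : ∀ i, (I i).IsTwoSided := fun i =>
    ⟨fun {a} b ha x hx => by rw [← mul_assoc, ha x hx, zero_mul]⟩
  have hart : ∀ i, IsArtinian R (I i) := by
    intro i
    induction i with
    | zero =>
      have : Subsingleton (I 0) := ⟨fun a b => Subtype.ext (by
        have ha := a.2 1 (by rw [Submodule.pow_zero, Ideal.one_eq_top]; trivial)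
        have hb := b.2 1 (by rw [Submodule.pow_zero, Ideal.one_eq_top]; trivial)
        rw [one_mul] at ha hb
        rw [ha, hb])⟩
      infer_instance
    | succ i ih =>
      obtain ⟨K, hK, N, c, y, hc0, hc, hJc, hI'⟩ := exists_essential_family hfin (I i)
      let soc : ∀ k, Submodule R (R ⧸ N k) := fun k =>
        { carrier := {z | ∀ j ∈ J, j • z = 0}
          add_mem' := fun ha hb j hj => by rw [smul_add, ha j hj, hb j hj, add_zero]
          zero_mem' := fun j _ => smul_zero j
          smul_mem' := fun r z hz j hj => by
            rw [← mul_smul]; exact hz _ (Ideal.IsTwoSided.mul_mem_of_left r hj) }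
      have hsoc : ∀ k, IsArtinian R (soc k) := by
        intro k
        have hsem : IsSemisimpleModule R (soc k) :=
          isSemisimpleModule_of_jacobson_smul fun j hj x => Subtype.ext (x.2 j hj)
        let c' : soc k := ⟨c k, hJc k⟩
        have hmem : ∀ P : Submodule R (soc k), P ≠ ⊥ → c' ∈ P := by
          intro P hP
          obtain ⟨z, hz, hz0⟩ := P.ne_bot_iff.mp hP
          obtain ⟨a, ha⟩ := hc k z.1 (fun h => hz0 (Subtype.ext h))
          have : c' = a • z := Subtype.ext ha.symm
          rw [this]; exact P.smul_mem a hz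
        have : IsSimpleModule R (soc k) := by
          have : Nontrivial (soc k) := ⟨c', 0, fun h => hc0 k (congrArg Subtype.val h)⟩
          have : IsSimpleOrder (Submodule R (soc k)) := ⟨fun P => by
            obtain ⟨P', hP'⟩ := exists_isCompl P
            by_cases h1 : P = ⊥
            · exact .inl h1
            · by_cases h2 : P' = ⊥
              · exact .inr (by simpa [h2] using hP'.sup_eq_top)
              · have := Submodule.disjoint_def.mp hP'.disjoint c' (hmem _ h1) (hmem _ h2)
                exact absurd (congrArg Subtype.val this) (hc0 k)⟩
          exact { }
        infer_instance
      let f : I (i + 1) →ₗ[R] ∀ k, soc k := LinearMap.pi fun k =>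
        ((LinearMap.toSpanSingleton R _ (y k)).comp (I (i + 1)).subtype).codRestrict (soc k)
          (fun a j hj => by
            have : j * a ∈ I i := fun x hx => by
              rw [← mul_assoc]
              exact a.2 _ (by rw [Submodule.pow_succ]; exact Ideal.mul_mem_mul hx hj)
            have := (hI' _).mp this k
            simpa [mul_smul] using this)
      have hle : I i ≤ I (i + 1) := fun a ha x hx => ha x (Ideal.pow_le_pow_right (Nat.le_succ i) hx)
      refine isArtinian_of_range_eq_ker (P := ∀ k, soc k) (Submodule.inclusion hle) f ?_
      ext a
      constructor
      · rintro ⟨b, rfl⟩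
        refine LinearMap.mem_ker.mpr (funext fun k => Subtype.ext ?_)
        exact (hI' _).mp b.2 k
      · intro ha
        refine ⟨⟨a, (hI' _).mpr fun k => ?_⟩, rfl⟩
        exact congrArg Subtype.val (congrFun (LinearMap.mem_ker.mp ha) k)
  have htop : I n = ⊤ := by
    refine (Ideal.eq_top_iff_one _).mpr fun x hx => ?_
    rw [hn] at hx
    rw [(Submodule.mem_bot R).mp hx, zero_mul]
  have := hart n
  refine isArtinian_of_injective (LinearMap.id.codRestrict (I n) fun x => ?_) fun x y h => ?_
  · rw [htop]; trivial
  · exact congrArg Subtype.val h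

end Artinian

/-! ### Chains of radical maps -/

section Radical

variable {R : Type} [Ring R]

/-- The usual `1 - uv` versus `1 - vu` argument, with inverse `1 + v (1 - uv)⁻¹ u`. -/
theorem isUnit_one_sub_comp_comm {M N : Type} [AddCommGroup M] [Module R M] [AddCommGroup N]
    [Module R N] (u : M →ₗ[R] N) (v : N →ₗ[R] M)
    (h : IsUnit (1 - u ∘ₗ v : Module.End R N)) : IsUnit (1 - v ∘ₗ u : Module.End R M) := by
  obtain ⟨w, hw1, hw2⟩ := isUnit_iff_exists.mp h
  have h1 : ∀ x, w x - u (v (w x)) = x := fun x => by simpa using LinearMap.congr_fun hw1 x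
  have h2 : ∀ x, w x - w (u (v x)) = x := fun x => by simpa using LinearMap.congr_fun hw2 x
  refine isUnit_iff_exists.mpr ⟨1 + v ∘ₗ w ∘ₗ u, LinearMap.ext fun x => ?_,
    LinearMap.ext fun x => ?_⟩
  · have := congrArg v (h1 (u x))
    simp only [map_sub] at this
    simp only [Module.End.mul_apply, LinearMap.sub_apply, LinearMap.add_apply,
      Module.End.one_apply, LinearMap.comp_apply, map_add]
    rw [← this]; abel
  · have := congrArg v (h2 (u x))
    simp only [map_sub] at this
    simp only [Module.End.mul_apply, LinearMap.sub_apply, LinearMap.add_apply,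
      Module.End.one_apply, LinearMap.comp_apply, map_sub]
    rw [sub_eq_iff_eq_add.mp this]; abel

/-- The (Kelly) radical of the category of `R`-modules: `f` is radical when `1 - f ∘ g` is
invertible for every `g` in the opposite direction. -/
def IsRad {M N : Type} [AddCommGroup M] [Module R M] [AddCommGroup N] [Module R N]
    (f : M →ₗ[R] N) : Prop :=
  ∀ g : N →ₗ[R] M, IsUnit (1 - f ∘ₗ g : Module.End R N)

section
variable {M N P : Type} [AddCommGroup M] [Module R M] [AddCommGroup N] [Module R N]
  [AddCommGroup P] [Module R P]

theorem IsRad.comp_right {f : M →ₗ[R] N} (hf : IsRad f) (h : P →ₗ[R] M) : IsRad (f ∘ₗ h) :=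
  fun g => hf (h ∘ₗ g)

theorem IsRad.comp_left {f : M →ₗ[R] N} (hf : IsRad f) (h : N →ₗ[R] P) : IsRad (h ∘ₗ f) :=
  fun g => isUnit_one_sub_comp_comm (f ∘ₗ g) h (hf (g ∘ₗ h))

theorem IsRad.comp_mem_jacobson {f : M →ₗ[R] N} (hf : IsRad f) (g : N →ₗ[R] M) :
    f ∘ₗ g ∈ Ring.jacobson (Module.End R N) := by
  rw [← Ideal.jacobson_bot, Ideal.mem_jacobson_iff]
  intro y
  have h := isUnit_one_sub_comp_comm (f ∘ₗ g) (-y) (hf (g ∘ₗ (-y)))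
  obtain ⟨w, -, hw⟩ := isUnit_iff_exists.mp h
  refine ⟨w, ?_⟩
  have : w * y * (f ∘ₗ g) + w = w * (1 - (-y) ∘ₗ (f ∘ₗ g)) := by
    rw [mul_sub, mul_one, LinearMap.neg_comp, mul_neg, sub_neg_eq_add, mul_assoc, add_comm]
    rfl
  rw [this, hw, sub_self]
  exact Submodule.zero_mem _
end

/-- Generators of `⨁ D n` over its endomorphism ring live in degrees at most some `N`. Since `D N`
maps onto all those `D k`, the module `D (N + 1)` is generated by images of maps `D N → D (N + 1)`.
Composing with the radical surjection `D (N + 1) → D N` gives `D N = J(End (D N)) D N`, and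
Nakayama's lemma applies. -/
theorem exists_subsingleton_of_surjective_isRad
    (hfin : ∀ (M : Type) [AddCommGroup M] [Module R M], Module.Finite (Module.End R M) M)
    (D : ℕ → Type) [∀ n, AddCommGroup (D n)] [∀ n, Module R (D n)]
    (r : ∀ n, D (n + 1) →ₗ[R] D n) (hsurj : ∀ n, Function.Surjective (r n))
    (hrad : ∀ n, IsRad (r n)) : ∃ n, Subsingleton (D n) := by
  classical
  obtain ⟨S, hS⟩ := (hfin (Π₀ n, D n)).fg_top
  obtain ⟨N, hN⟩ := (S.biUnion DFinsupp.support).bddAbove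
  have hq : ∀ k N, k ≤ N → ∃ q : D N →ₗ[R] D k, Function.Surjective q := by
    intro k N hkN
    induction hkN with
    | refl => exact ⟨LinearMap.id, Function.surjective_id⟩
    | step _ ih =>
      obtain ⟨q, hq⟩ := ih
      exact ⟨q ∘ₗ r _, hq.comp (hsurj _)⟩
  let U : Submodule R (D (N + 1)) := ⨆ g : D N →ₗ[R] D (N + 1), LinearMap.range g
  let W : Submodule (Module.End R (Π₀ n, D n)) (Π₀ n, D n) :=
    { carrier := {m | ∀ h : (Π₀ n, D n) →ₗ[R] D (N + 1), h m ∈ U}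
      add_mem' := fun ha hb h => by rw [map_add]; exact U.add_mem (ha h) (hb h)
      zero_mem' := fun h => by rw [map_zero]; exact U.zero_mem
      smul_mem' := fun f m hm h => hm (h ∘ₗ f) }
  have hW : W = ⊤ := by
    rw [eq_top_iff, ← hS, Submodule.span_le]
    intro s hs h
    rw [← DFinsupp.sum_single (f := s), DFinsupp.sum, map_sum]
    refine U.sum_mem fun k hk => ?_
    obtain ⟨q, hq⟩ := hq k N (hN (Finset.mem_biUnion.mpr ⟨s, hs, hk⟩))
    obtain ⟨z, hz⟩ := hq (s k)
    refine Submodule.mem_iSup_of_mem (h ∘ₗ DFinsupp.lsingle k ∘ₗ q) ⟨z, ?_⟩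
    simp [hz]
  have hU : ∀ x, x ∈ U := fun x => by
    have h1 : DFinsupp.single (N + 1) x ∈ W := hW ▸ Submodule.mem_top
    simpa using h1 (DFinsupp.lapply (N + 1))
  refine ⟨N, ?_⟩
  have hbot : (⊤ : Submodule (Module.End R (D N)) (D N)) = ⊥ := by
    refine Submodule.FG.eq_bot_of_le_jacobson_smul (hfin (D N)).fg_top fun x _ => ?_
    obtain ⟨z, rfl⟩ := hsurj N x
    have hz := hU z
    induction hz using Submodule.iSup_induction' with
    | mem g z hz =>
      obtain ⟨w, rfl⟩ := hz
      exact Submodule.smul_mem_smul ((hrad N).comp_mem_jacobson g) (Submodule.mem_top (x := w))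
    | zero => rw [map_zero]; exact Submodule.zero_mem _
    | add a b _ _ ha hb =>
      rw [map_add]
      exact Submodule.add_mem _ (ha (Submodule.mem_top)) (hb (Submodule.mem_top))
  exact (Submodule.subsingleton_iff (Module.End R (D N))).mp (subsingleton_of_bot_eq_top hbot.symm)

/-- An inverse sequence of radical maps between artinian modules has a zero composite: restrict to the
stable images `E n`, on which suitable composites are surjective and still radical. -/
theorem exists_comp_eq_zero_of_isRad
    (hfin : ∀ (M : Type) [AddCommGroup M] [Module R M], Module.Finite (Module.End R M) M)
    (D : ℕ → Type) [∀ n, AddCommGroup (D n)] [∀ n, Module R (D n)] [∀ n, IsArtinian R (D n)]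
    (f : ∀ n, D (n + 1) →ₗ[R] D n) (hrad : ∀ n, IsRad (f n))
    (P : ∀ n, D n →ₗ[R] D 0) (hP0 : P 0 = LinearMap.id) (hP : ∀ n, P (n + 1) = P n ∘ₗ f n) :
    ∃ n, P n = 0 := by
  let φ : ∀ n m, n ≤ m → (D m →ₗ[R] D n) := fun n m h =>
    Nat.leRec (motive := fun m _ => D m →ₗ[R] D n) LinearMap.id (fun m _ p => p ∘ₗ f m) h
  have φ_self : ∀ n, φ n n le_rfl = LinearMap.id := fun n => Nat.leRec_self ..
  have φ_succ : ∀ n m (h : n ≤ m), φ n (m + 1) (h.trans (Nat.le_succ m)) = φ n m h ∘ₗ f m :=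
    fun n m h => Nat.leRec_succ ..
  have φ_comp : ∀ n m l (h : n ≤ m) (h' : m ≤ l), φ n l (h.trans h') = φ n m h ∘ₗ φ m l h' := by
    intro n m l h h'
    induction l, h' using Nat.le_induction with
    | base => rw [φ_self]; rfl
    | succ l h' ih => rw [φ_succ n l (h.trans h'), φ_succ m l h', ih]; rfl
  have hPφ : ∀ n, P n = φ 0 n (Nat.zero_le n) := by
    intro n
    induction n with
    | zero => rw [hP0, φ_self]
    | succ n ih => rw [hP, ih, ← φ_succ]
  have hstab : ∀ n, ∃ k, ∀ m (h : n + k ≤ m),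
      LinearMap.range (φ n (n + k) (Nat.le_add_right n k)) =
        LinearMap.range (φ n m ((Nat.le_add_right n k).trans h)) := by
    intro n
    obtain ⟨k, hk⟩ := IsArtinian.monotone_stabilizes
      (⟨fun k => OrderDual.toDual (LinearMap.range (φ n (n + k) (Nat.le_add_right n k))),
        fun a b hab => by
          change LinearMap.range (φ n (n + b) _) ≤ LinearMap.range (φ n (n + a) _)
          rw [φ_comp n (n + a) (n + b) (by lia) (by lia)]
          exact LinearMap.range_comp_le_range _ _⟩ : ℕ →o (Submodule R (D n))ᵒᵈ)
    refine ⟨k, fun m h => ?_⟩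
    obtain ⟨l, rfl⟩ := Nat.exists_eq_add_of_le h
    have := hk (k + l) (Nat.le_add_right k l)
    have e : n + (k + l) = n + k + l := (Nat.add_assoc n k l).symm
    have e' : ∀ m (h : n + (k + l) = m), LinearMap.range (φ n (n + (k + l)) (by lia)) =
      LinearMap.range (φ n m (by lia)) := by rintro m rfl; rfl
    rw [← e' _ e]
    exact OrderDual.toDual.injective this
  choose K hK using hstab
  -- `E n` is the stable image in `D n`, attained from degree `n + K n` on.
  let E : ∀ n, Submodule R (D n) := fun n => LinearMap.range (φ n (n + K n) (Nat.le_add_right _ _))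
  have hE : ∀ n m (h : n ≤ m), (E m).map (φ n m h) = E n := by
    intro n m h
    have h1 := hK n (max (n + K n) (m + K m)) (le_max_left _ _)
    have h2 := hK m (max (n + K n) (m + K m)) (le_max_right _ _)
    change Submodule.map _ (LinearMap.range _) = LinearMap.range _
    rw [h1, h2, ← LinearMap.range_comp, ← φ_comp]
  -- Along `ν` each step contains a radical map preceded by a passage to the stable image.
  let ν : ℕ → ℕ := fun k => Nat.rec 0 (fun _ n => n + K n + 1) k
  have hν : ∀ k, ν (k + 1) = ν k + K (ν k) + 1 := fun k => rfl
  obtain ⟨k, hk⟩ := exists_subsingleton_of_surjective_isRad hfin (fun k => E (ν k))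
    (fun k => (φ (ν k) (ν k + K (ν k)) (Nat.le_add_right _ _)).rangeRestrict ∘ₗ
      f (ν k + K (ν k)) ∘ₗ (E (ν (k + 1))).subtype)
    (fun k x => by
      have := hE (ν k) (ν k + K (ν k) + 1) (by lia)
      obtain ⟨z, hz, hzx⟩ := this.ge x.2
      refine ⟨⟨z, hz⟩, Subtype.ext ?_⟩
      rw [← hzx, φ_succ _ _ (Nat.le_add_right _ _)]
      rfl)
    (fun k => ((hrad _).comp_right _).comp_left _)
  refine ⟨0 + K 0, ?_⟩
  have h0 : E 0 = ⊥ := by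
    rw [← hE 0 (ν k) (Nat.zero_le _), Submodule.eq_bot_of_subsingleton (p := E (ν k)),
      Submodule.map_bot]
  rw [hPφ]
  exact LinearMap.range_eq_bot.mp h0

end Radical

/-! ### Duality for finitely generated free modules -/

section Dual

variable {A : Type} [Ring A]

/-- The right `A`-linear map between duals induced by `b : F →ₗ[A] F'`. -/
def dual {F F' : Type} [AddCommGroup F] [Module A F] [AddCommGroup F'] [Module A F']
    (b : F →ₗ[A] F') : (F' →ₗ[A] A) →ₗ[Aᵐᵒᵖ] (F →ₗ[A] A) where
  toFun α := α ∘ₗ b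
  map_add' _ _ := rfl
  map_smul' _ _ := rfl

variable {F F' F'' : Type} [AddCommGroup F] [Module A F] [AddCommGroup F'] [Module A F']
  [AddCommGroup F''] [Module A F'']

@[simp] theorem dual_apply (b : F →ₗ[A] F') (α : F' →ₗ[A] A) : dual b α = α ∘ₗ b := rfl

theorem dual_comp (c : F' →ₗ[A] F'') (b : F →ₗ[A] F') : dual (c ∘ₗ b) = dual b ∘ₗ dual c := rfl

theorem dual_id : dual (LinearMap.id : F →ₗ[A] F) = LinearMap.id := rfl

variable [Module.Free A F] [Module.Finite A F]

/-- The dual of a finitely generated free module is projective, and maps between such duals come from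
maps between the modules. -/
theorem dual_lift {Q : Type} [AddCommGroup Q] [Module Aᵐᵒᵖ Q] (σ : (F' →ₗ[A] A) →ₗ[Aᵐᵒᵖ] Q)
    (g : (F →ₗ[A] A) →ₗ[Aᵐᵒᵖ] Q) (h : LinearMap.range g ≤ LinearMap.range σ) :
    ∃ b : F' →ₗ[A] F, ∀ α, σ (dual b α) = g α := by
  let e := Module.Free.chooseBasis A F
  choose γ hγ using fun i => h ⟨e.coord i, rfl⟩
  refine ⟨∑ i, (γ i).smulRight (e i), fun α => ?_⟩
  have h1 : dual (∑ i, (γ i).smulRight (e i)) α = ∑ i, MulOpposite.op (α (e i)) • γ i := by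
    ext x; simp
  have h2 : α = ∑ i, MulOpposite.op (α (e i)) • e.coord i := by
    refine e.ext fun j => ?_
    simp [Finsupp.single_apply]
  rw [h1]
  conv_rhs => rw [h2]
  simp [hγ]

omit [Module.Finite A F] in
theorem dual_injective {b b' : F' →ₗ[A] F} (h : dual b = dual b') : b = b' := by
  let e := Module.Free.chooseBasis A F
  ext x
  refine e.ext_elem fun i => ?_
  exact LinearMap.congr_fun (LinearMap.congr_fun h (e.coord i)) x

theorem exists_dual_eq (g : (F →ₗ[A] A) →ₗ[Aᵐᵒᵖ] (F' →ₗ[A] A)) :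
    ∃ b : F' →ₗ[A] F, dual b = g := by
  obtain ⟨b, hb⟩ := dual_lift LinearMap.id g (by simp)
  exact ⟨b, LinearMap.ext hb⟩

/-- Extension of `w` along `z`, when the dual of `w` takes values in the image of the dual of `z`. -/
theorem exists_comp_eq_of_dual (z : F' →ₗ[A] F'') (w : F' →ₗ[A] F)
    (h : LinearMap.range (dual w) ≤ LinearMap.range (dual z)) : ∃ y : F'' →ₗ[A] F, y ∘ₗ z = w := by
  obtain ⟨y, hy⟩ := dual_lift (dual z) (dual w) h
  exact ⟨y, dual_injective (LinearMap.ext hy)⟩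

open Classical in
instance : Module.Finite Aᵐᵒᵖ (F →ₗ[A] A) := by
  let e := Module.Free.chooseBasis A F
  refine ⟨⟨Finset.univ.image e.coord, eq_top_iff.mpr fun α _ => ?_⟩⟩
  have h2 : α = ∑ i, MulOpposite.op (α (e i)) • e.coord i := by
    refine e.ext fun j => ?_
    simp [Finsupp.single_apply]
  rw [h2]
  exact Submodule.sum_mem _ fun i _ => Submodule.smul_mem _ _ (Submodule.subset_span (by simp))

end Dual

/-! ### Presentations, transposes and radical factorizations -/

section Presentations

variable (A : Type) [Ring A]

/-- A homomorphism between finitely generated free left modules, viewed as a presentation of its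
cokernel. -/
structure Pres where
  F₁ : Type
  F₀ : Type
  [acg₁ : AddCommGroup F₁]
  [mod₁ : Module A F₁]
  [free₁ : Module.Free A F₁]
  [fin₁ : Module.Finite A F₁]
  [acg₀ : AddCommGroup F₀]
  [mod₀ : Module A F₀]
  [free₀ : Module.Free A F₀]
  [fin₀ : Module.Finite A F₀]
  f : F₁ →ₗ[A] F₀

attribute [instance] Pres.acg₁ Pres.mod₁ Pres.free₁ Pres.fin₁ Pres.acg₀ Pres.mod₀ Pres.free₀
  Pres.fin₀

variable {A}
namespace Pres

/-- Morphisms of presentations are commutative squares. -/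
structure Hom (X Y : Pres A) where
  b : X.F₁ →ₗ[A] Y.F₁
  c : X.F₀ →ₗ[A] Y.F₀
  comm : Y.f ∘ₗ b = c ∘ₗ X.f

/-- The endomorphism ring of a presentation. -/
def Ends (X : Pres A) : Subring (Module.End A X.F₁ × Module.End A X.F₀) where
  carrier := {x | X.f ∘ₗ x.1 = x.2 ∘ₗ X.f}
  mul_mem' {x y} hx hy := by
    change X.f ∘ₗ (x.1 ∘ₗ y.1) = (x.2 ∘ₗ y.2) ∘ₗ X.f
    rw [← LinearMap.comp_assoc, hx, LinearMap.comp_assoc, hy, LinearMap.comp_assoc]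
  one_mem' := rfl
  add_mem' {x y} hx hy := by
    change X.f ∘ₗ (x.1 + y.1) = (x.2 + y.2) ∘ₗ X.f
    rw [LinearMap.comp_add, hx, hy, LinearMap.add_comp]
  zero_mem' := by
    change X.f ∘ₗ 0 = 0 ∘ₗ X.f
    simp
  neg_mem' {x} hx := by
    change X.f ∘ₗ (-x.1) = (-x.2) ∘ₗ X.f
    rw [LinearMap.comp_neg, hx, LinearMap.neg_comp]

/-- Composition of commutative squares, with `s` applied after `t`. -/
def Hom.comp {X Y Z : Pres A} (s : Hom Y Z) (t : Hom X Y) : Hom X Z where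
  b := s.b ∘ₗ t.b
  c := s.c ∘ₗ t.c
  comm := by rw [← LinearMap.comp_assoc, s.comm, LinearMap.comp_assoc, t.comm, LinearMap.comp_assoc]

/-- An element of `Ends X` as a morphism. -/
def Ends.hom {X : Pres A} (x : X.Ends) : Hom X X := ⟨x.1.1, x.1.2, x.2⟩

/-- An endomorphism as an element of the ring `Ends X`. -/
def Hom.toEnds {X : Pres A} (t : Hom X X) : X.Ends := ⟨(t.b, t.c), t.comm⟩

theorem isUnit_of_isUnit {X : Pres A} {x : X.Ends} (h₁ : IsUnit x.1.1) (h₀ : IsUnit x.1.2) :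
    IsUnit x := by
  obtain ⟨v, hv, hv'⟩ := isUnit_iff_exists.mp h₁
  obtain ⟨w, hw, hw'⟩ := isUnit_iff_exists.mp h₀
  refine isUnit_iff_exists.mpr ⟨⟨(v, w), ?_⟩, Subtype.ext (Prod.ext hv hw),
    Subtype.ext (Prod.ext hv' hw')⟩
  change X.f ∘ₗ v = w ∘ₗ X.f
  have hx : X.f ∘ₗ x.1.1 = x.1.2 ∘ₗ X.f := x.2
  calc X.f ∘ₗ v = (w * x.1.2) ∘ₗ X.f ∘ₗ v := by rw [hw']; rfl
    _ = w ∘ₗ (x.1.2 ∘ₗ X.f) ∘ₗ v := rfl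
    _ = w ∘ₗ X.f ∘ₗ (x.1.1 * v) := by rw [← hx]; rfl
    _ = w ∘ₗ X.f := by rw [hv]; rfl

theorem isUnit_fst {X : Pres A} {x : X.Ends} (h : IsUnit x) : IsUnit x.1.1 :=
  h.map ((RingHom.fst _ _).comp X.Ends.subtype)

theorem isUnit_snd {X : Pres A} {x : X.Ends} (h : IsUnit x) : IsUnit x.1.2 :=
  h.map ((RingHom.snd _ _).comp X.Ends.subtype)

/-- Radical morphisms of presentations. -/
def Hom.Radical {X Y : Pres A} (t : Hom X Y) : Prop :=
  ∀ s : Hom Y X, IsUnit (1 - (s.comp t).toEnds)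

theorem isUnit_one_sub_comp_comm {X Y : Pres A} (s : Hom Y X) (t : Hom X Y)
    (h : IsUnit (1 - (s.comp t).toEnds)) : IsUnit (1 - (t.comp s).toEnds) :=
  isUnit_of_isUnit (Finendo.isUnit_one_sub_comp_comm s.b t.b (isUnit_fst h))
    (Finendo.isUnit_one_sub_comp_comm s.c t.c (isUnit_snd h))

theorem Hom.Radical.comp_left {X Y Z : Pres A} {t : Hom X Y} (ht : t.Radical) (u : Hom Y Z) :
    (u.comp t).Radical := fun s => ht (s.comp u)

theorem Hom.Radical.comp_right {X Y Z : Pres A} {t : Hom Y Z} (ht : t.Radical) (u : Hom X Y) :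
    (t.comp u).Radical := fun s =>
  isUnit_one_sub_comp_comm u (s.comp t) (by
    exact ht (u.comp s))


/-- The Auslander–Bridger transpose of a presentation. -/
abbrev Tr (X : Pres A) : Type := (X.F₁ →ₗ[A] A) ⧸ LinearMap.range (dual X.f)

/-- The map of transposes induced by a morphism. -/
def Hom.tr {X Y : Pres A} (t : Hom X Y) : Y.Tr →ₗ[Aᵐᵒᵖ] X.Tr :=
  Submodule.mapQ _ _ (dual t.b) (by
    rintro _ ⟨α, rfl⟩
    refine ⟨dual t.c α, ?_⟩
    change (α ∘ₗ t.c) ∘ₗ X.f = (α ∘ₗ Y.f) ∘ₗ t.b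
    rw [LinearMap.comp_assoc, LinearMap.comp_assoc, t.comm])

theorem Hom.tr_mk {X Y : Pres A} (t : Hom X Y) (α : Y.F₁ →ₗ[A] A) :
    t.tr (Submodule.mkQ _ α) = Submodule.mkQ _ (dual t.b α) := rfl

theorem Hom.tr_comp {X Y Z : Pres A} (s : Hom Y Z) (t : Hom X Y) :
    (s.comp t).tr = t.tr ∘ₗ s.tr := by
  refine Submodule.linearMap_qext _ (LinearMap.ext fun α => rfl)

/-- The transpose is full. -/
theorem exists_hom_of_tr {X Y : Pres A} (g : X.Tr →ₗ[Aᵐᵒᵖ] Y.Tr) : ∃ s : Hom Y X, s.tr = g := by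
  obtain ⟨b, hb⟩ := dual_lift (LinearMap.range (dual Y.f)).mkQ
    (g ∘ₗ (LinearMap.range (dual X.f)).mkQ) (by simp)
  have hr : LinearMap.range (dual (X.f ∘ₗ b)) ≤ LinearMap.range (dual Y.f) := by
    rintro _ ⟨α, rfl⟩
    have h1 := hb (dual X.f α)
    have h2 : (LinearMap.range (dual X.f)).mkQ (dual X.f α) = 0 := by
      rw [← LinearMap.mem_ker, Submodule.ker_mkQ]; exact ⟨α, rfl⟩
    rw [LinearMap.comp_apply, h2, map_zero, ← LinearMap.mem_ker, Submodule.ker_mkQ] at h1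
    exact h1
  obtain ⟨c, hc⟩ := exists_comp_eq_of_dual _ _ hr
  exact ⟨⟨b, c, hc.symm⟩, Submodule.linearMap_qext _ (LinearMap.ext hb)⟩

/-- The transpose as an anti-homomorphism of endomorphism rings. -/
def trEnds (X : Pres A) : X.Ends →+* (Module.End Aᵐᵒᵖ X.Tr)ᵐᵒᵖ where
  toFun x := MulOpposite.op (Ends.hom x).tr
  map_one' := congrArg MulOpposite.op (Submodule.linearMap_qext _ (LinearMap.ext fun _ => rfl))
  map_mul' _ _ := congrArg MulOpposite.op (Submodule.linearMap_qext _ (LinearMap.ext fun _ => rfl))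
  map_zero' := congrArg MulOpposite.op (Submodule.linearMap_qext _ (LinearMap.ext fun α => by
    change Submodule.mkQ _ (α ∘ₗ 0) = 0
    rw [LinearMap.comp_zero, map_zero]))
  map_add' x y := congrArg MulOpposite.op (Submodule.linearMap_qext _ (LinearMap.ext fun α => by
    change Submodule.mkQ _ (α ∘ₗ (x.1.1 + y.1.1)) = _
    rw [LinearMap.comp_add, map_add]
    rfl))

theorem Hom.Radical.isRad_tr {X Y : Pres A} {t : Hom X Y} (ht : t.Radical) : IsRad t.tr := by
  intro g
  obtain ⟨s, rfl⟩ := exists_hom_of_tr g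
  have h := ((ht s).map X.trEnds).unop
  rw [map_sub, map_one] at h
  change IsUnit (1 - (s.comp t).tr) at h
  rwa [Hom.tr_comp] at h

instance [IsArtinianRing Aᵐᵒᵖ] (X : Pres A) : IsArtinian Aᵐᵒᵖ X.Tr := inferInstance

end Pres

/-- Duality as an anti-homomorphism of endomorphism rings. -/
def dualEnd (F : Type) [AddCommGroup F] [Module A F] :
    Module.End A F →+* (Module.End Aᵐᵒᵖ (F →ₗ[A] A))ᵐᵒᵖ where
  toFun x := MulOpposite.op (dual x)
  map_one' := rfl
  map_mul' _ _ := rfl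
  map_zero' := congrArg MulOpposite.op (LinearMap.ext fun α => by simp)
  map_add' x y := congrArg MulOpposite.op (LinearMap.ext fun α => by simp [LinearMap.comp_add])

theorem isRad_dual {F F' : Type} [AddCommGroup F] [Module A F] [AddCommGroup F'] [Module A F']
    [Module.Free A F] [Module.Finite A F] {n : F →ₗ[A] F'}
    (hn : ∀ g : F' →ₗ[A] F, IsUnit (1 - g ∘ₗ n : Module.End A F)) : IsRad (dual n) := by
  intro g
  obtain ⟨b, rfl⟩ := exists_dual_eq g
  have h := ((hn b).map (dualEnd F)).unop
  rw [map_sub, map_one] at h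
  exact h

/-- A homomorphism `cokernel → M`, for the module presented by `X`, given as a map from `F₀`
vanishing on relations. -/
structure State (A : Type) [Ring A] (M : Type) [AddCommGroup M] [Module A M] where
  X : Pres A
  a : X.F₀ →ₗ[A] M
  h : a ∘ₗ X.f = 0

/-- `s.IsRadMultiple`: the homomorphism `s` factors through a radical map of presentations. -/
def State.IsRadMultiple {M : Type} [AddCommGroup M] [Module A M] (s : State A M) : Prop :=
  ∃ (s' : State A M) (t : s.X.Hom s'.X), t.Radical ∧ s'.a ∘ₗ t.c = s.a

section Vanishing

variable {M : Type} [AddCommGroup M] [Module A M] [IsArtinianRing Aᵐᵒᵖ]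
    (hfin : ∀ (M : Type) [AddCommGroup M] [Module Aᵐᵒᵖ M],
      Module.Finite (Module.End Aᵐᵒᵖ M) M)
include hfin

/-- If every homomorphism into `M` is a radical multiple, the transposes of a long enough composite
of radical maps vanish, so that its component `F₁ → F₁'` factors through `X.f`. -/
theorem exists_factor (hM : ∀ s : State A M, s.IsRadMultiple) (s : State A M) :
    ∃ (s' : State A M) (t : s.X.Hom s'.X) (y : s.X.F₀ →ₗ[A] s'.X.F₁),
      t.Radical ∧ s'.a ∘ₗ t.c = s.a ∧ y ∘ₗ s.X.f = t.b := by
  choose next t ht hta using hM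
  let st : ℕ → State A M := fun n => Nat.rec s (fun _ s => next s) n
  let T : ∀ n, s.X.Hom (st n).X := fun n => Nat.rec ⟨LinearMap.id, LinearMap.id, rfl⟩
    (fun n T => (t (st n)).comp T) n
  have hT : ∀ n, (st n).a ∘ₗ (T n).c = s.a := by
    intro n
    induction n with
    | zero => rfl
    | succ n ih =>
      change (next (st n)).a ∘ₗ (t (st n)).c ∘ₗ (T n).c = s.a
      rw [← LinearMap.comp_assoc, hta, ih]
  have h0 : (⟨LinearMap.id, LinearMap.id, rfl⟩ : s.X.Hom s.X).tr = LinearMap.id :=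
    Submodule.linearMap_qext _ (LinearMap.ext fun α => rfl)
  obtain ⟨n, hn⟩ := exists_comp_eq_zero_of_isRad hfin (fun n => (st n).X.Tr)
    (fun n => (t (st n)).tr) (fun n => (ht _).isRad_tr) (fun n => (T n).tr)
    h0 (fun n => Pres.Hom.tr_comp _ _)
  have hn' : (T (n + 1)).tr = 0 := by
    change ((t (st n)).comp (T n)).tr = 0
    rw [Pres.Hom.tr_comp, hn, LinearMap.zero_comp]
  obtain ⟨y, hy⟩ := exists_comp_eq_of_dual s.X.f (T (n + 1)).b (by
    rintro _ ⟨α, rfl⟩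
    have h1 := LinearMap.congr_fun hn' (Submodule.mkQ _ α)
    rw [Pres.Hom.tr_mk, LinearMap.zero_apply, ← LinearMap.mem_ker, Submodule.ker_mkQ] at h1
    exact h1)
  exact ⟨st (n + 1), T (n + 1), y, (ht (st n)).comp_right (T n), hT (n + 1), hy⟩

/-- Factorization through a map `n` of free modules that is radical among maps of modules, not only
among maps of presentations. The correction `c₁` of the second radical map kills the relations, so
that any `g` gives a morphism of presentations `⟨0, g ∘ₗ c₁⟩`. -/
theorem exists_strong_factor (hM : ∀ s : State A M, s.IsRadMultiple) (s : State A M) :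
    ∃ (s' : State A M) (n : s.X.F₀ →ₗ[A] s'.X.F₀),
      (∀ g : s'.X.F₀ →ₗ[A] s.X.F₀, IsUnit (1 - g ∘ₗ n : Module.End A s.X.F₀)) ∧
        s'.a ∘ₗ n = s.a := by
  obtain ⟨s₁, t₀, y₀, ht₀, ha₀, hy₀⟩ := exists_factor hfin hM s
  obtain ⟨s₂, t₁, y₁, ht₁, ha₁, hy₁⟩ := exists_factor hfin hM s₁
  let c₁ := t₁.c - s₂.X.f ∘ₗ y₁
  have hc₁ : c₁ ∘ₗ s₁.X.f = 0 := by
    rw [LinearMap.sub_comp, LinearMap.comp_assoc, hy₁, t₁.comm, sub_self]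
  have hac₁ : s₂.a ∘ₗ c₁ = s₁.a := by
    rw [LinearMap.comp_sub, ← LinearMap.comp_assoc, s₂.h, LinearMap.zero_comp, sub_zero, ha₁]
  refine ⟨s₂, c₁ ∘ₗ t₀.c, fun g => ?_, ?_⟩
  · have h := Pres.isUnit_snd (ht₀ ⟨0, g ∘ₗ c₁, by
      rw [LinearMap.comp_zero, LinearMap.comp_assoc, hc₁, LinearMap.comp_zero]⟩)
    exact h
  · rw [← LinearMap.comp_assoc, hac₁, ha₀]

/-- If all homomorphisms into `M` are radical multiples, iterating `exists_strong_factor` gives a chain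
of radical maps of free modules; its dual has a zero composite, through which `a` factors. -/
theorem State.a_eq_zero (hM : ∀ s : State A M, s.IsRadMultiple) (s : State A M) : s.a = 0 := by
  choose next n hn hna using exists_strong_factor hfin hM
  let st : ℕ → State A M := fun n => Nat.rec s (fun _ s => next s) n
  let T : ∀ k, s.X.F₀ →ₗ[A] (st k).X.F₀ := fun k => Nat.rec LinearMap.id
    (fun k T => n (st k) ∘ₗ T) k
  have hT : ∀ k, (st k).a ∘ₗ T k = s.a := by
    intro k
    induction k with
    | zero => rfl
    | succ k ih =>
      change (next (st k)).a ∘ₗ n (st k) ∘ₗ T k = s.a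
      rw [← LinearMap.comp_assoc, hna, ih]
  obtain ⟨k, hk⟩ := exists_comp_eq_zero_of_isRad hfin (fun k => (st k).X.F₀ →ₗ[A] A)
    (fun k => dual (n (st k))) (fun k => isRad_dual (hn _)) (fun k => dual (T k)) rfl
    (fun k => rfl)
  have : T k = 0 := dual_injective (by rw [hk]; ext; simp)
  rw [← hT k, this, LinearMap.comp_zero]

theorem exists_not_isRadMultiple [Nontrivial M] : ∃ s : State A M, ¬ s.IsRadMultiple := by
  by_contra! hM
  obtain ⟨x, hx⟩ := exists_ne (0 : M)
  have := State.a_eq_zero hfin hM ⟨⟨PUnit, A, 0⟩, LinearMap.toSpanSingleton A M x, by simp⟩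
  exact hx (by simpa using LinearMap.congr_fun this 1)

end Vanishing

end Presentations

/-! ### Minimal idempotents and Fitting's lemma -/

section Idempotents

/-- Let `ε` be an idempotent outside `B` of minimal measure. Because `B` is closed under addition, `ε`
is primitive, and the Fitting decomposition of `1 - z` for `z ∈ εEε` shows that `z` has a left
inverse in the corner whenever `1 - z` is not a unit. -/
theorem exists_minimal_idempotent {E : Type} [Ring E] {α : Type} [Preorder α] [WellFoundedLT α]
    (μ : E → α)
    (hμ : ∀ π ε : E, π * π = π → ε * ε = ε → π * ε = π → ε * π = π → π ≠ ε → μ π < μ ε)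
    (hfit : ∀ x : E, ∃ n ≠ 0, ∃ e v : E, v * x ^ n = e ∧ x ^ n * v = e ∧
      e * x ^ n = x ^ n ∧ x ^ n * e = x ^ n)
    (B : Set E) (hB : ∀ x ∈ B, ∀ y ∈ B, x + y ∈ B) (h1 : (1 : E) ∉ B) :
    ∃ ε : E, ε * ε = ε ∧ ε ∉ B ∧
      ∀ z : E, ε * z = z → z * ε = z → ¬ IsUnit (1 - z) → ∃ q, q * z = ε := by
  obtain ⟨ε, ⟨hε, hεB⟩, hmin⟩ := (InvImage.wf μ wellFounded_lt).has_min
    {ε : E | ε * ε = ε ∧ ε ∉ B} ⟨1, mul_one 1, h1⟩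
  refine ⟨ε, hε, hεB, fun z hεz hzε hz => ?_⟩
  obtain ⟨n, hn, e, v, hve, hev, hex, hxe⟩ := hfit (1 - z)
  have hpow₁ : ∀ m, ∃ q, (1 - z) ^ m = 1 - q * z := by
    intro m
    induction m with
    | zero => exact ⟨0, by simp⟩
    | succ m ih =>
      obtain ⟨q, hq⟩ := ih
      exact ⟨1 + q - q * z, by rw [pow_succ, hq]; noncomm_ring⟩
  have hpow₂ : ∀ m, ∃ q, (1 - z) ^ m = 1 - z * q := by
    intro m
    induction m with
    | zero => exact ⟨0, by simp⟩
    | succ m ih =>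
      obtain ⟨q, hq⟩ := ih
      exact ⟨1 + q - z * q, by rw [pow_succ', hq]; noncomm_ring⟩
  obtain ⟨q₁, hq₁⟩ := hpow₁ n
  obtain ⟨q₂, hq₂⟩ := hpow₂ n
  have hcomm : Commute ε ((1 - z) ^ n) := by
    refine Commute.pow_right ?_ n
    change ε * (1 - z) = (1 - z) * ε
    rw [mul_sub, sub_mul, hεz, hzε, mul_one, one_mul]
  set y := (1 - z) ^ n with hy
  have hee : e * e = e := by
    calc e * e = v * (y * e) := by rw [← mul_assoc, hve]
      _ = e := by rw [hxe, hve]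
  have hε1 : ε * e = e * ε * e := by
    calc ε * e = y * (ε * v) := by rw [← hev, ← mul_assoc, hcomm.eq, mul_assoc]
      _ = e * (y * (ε * v)) := by rw [← mul_assoc e, hex]
      _ = e * ε * e := by rw [← mul_assoc y, ← hcomm.eq, mul_assoc, hev, ← mul_assoc]
  have hε2 : e * ε = e * ε * e := by
    calc e * ε = v * ε * y := by rw [← hve, mul_assoc, ← hcomm.eq, mul_assoc]
      _ = v * ε * y * e := by rw [mul_assoc (v * ε), hxe]
      _ = e * ε * e := by rw [mul_assoc v, hcomm.eq, ← mul_assoc, hve]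
  have hεe : ε * e = e * ε := hε1.trans hε2.symm
  have hyπ : y * (1 - e) = 0 := by rw [mul_sub, mul_one, hxe, sub_self]
  have hπ₁ : 1 - e = q₁ * z * (1 - e) := by
    rw [hq₁, sub_mul, one_mul, sub_eq_zero] at hyπ; exact hyπ
  have hπ₂ : 1 - e = z * q₂ * (1 - e) := by
    rw [hq₂, sub_mul, one_mul, sub_eq_zero] at hyπ; exact hyπ
  have hεπ : ε * (1 - e) = 1 - e := by
    rw [hπ₂, mul_assoc z, ← mul_assoc, hεz]
  have hπε : (1 - e) * ε = 1 - e := by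
    rw [sub_mul, one_mul, ← hεe]
    rwa [mul_sub, mul_one] at hεπ
  have hππ : (1 - e) * (1 - e) = 1 - e := by
    rw [mul_sub, mul_one, sub_mul, one_mul, hee, sub_self, sub_zero]
  have hπ0 : 1 - e ≠ 0 := by
    intro h
    rw [sub_eq_zero] at h
    apply hz
    rw [← isUnit_pow_iff hn]
    exact isUnit_iff_exists.mpr ⟨v, by rw [← hy, hev, h], by rw [← hy, hve, h]⟩
  generalize 1 - e = π at hyπ hπ₁ hπ₂ hεπ hπε hππ hπ0
  have hπε' : π = ε := by
    by_contra hne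
    have hπB : π ∈ B := by
      by_contra hπB
      exact hmin π ⟨hππ, hπB⟩ (hμ π ε hππ hε hπε hεπ hne)
    have h2 : (ε - π) * (ε - π) = ε - π := by
      rw [mul_sub, sub_mul, sub_mul, hε, hπε, hεπ, hππ, sub_self, sub_zero]
    have hB2 : ε - π ∈ B := by
      by_contra hB2
      refine hmin (ε - π) ⟨h2, hB2⟩ (hμ _ ε h2 hε ?_ ?_ ?_)
      · rw [sub_mul, hε, hπε]
      · rw [mul_sub, hε, hεπ]
      · intro h; exact hπ0 (by simpa using h)
    exact hεB (by simpa using hB _ hπB _ hB2)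
  refine ⟨q₁, ?_⟩
  rw [← hzε, ← mul_assoc, ← hπε', ← hπ₁]

/-- Fitting's lemma in terms of a commuting partial inverse. -/
theorem exists_fitting {R D : Type} [Ring R] [AddCommGroup D] [Module R D] {y : Module.End R D}
    (h : IsCompl (LinearMap.ker y) (LinearMap.range y)) :
    ∃ e v : Module.End R D, v * y = e ∧ y * v = e ∧ e * y = y ∧ y * e = y ∧ v * e = v ∧
      e * v = v := by
  let p := (LinearMap.range y).projectionOnto (LinearMap.ker y) h.symm
  have hp : ∀ x, y (p x) = y x := fun x => by
    have h1 : p (x - p x) = 0 := by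
      rw [map_sub, Submodule.projectionOnto_apply_left, sub_self]
    rw [Submodule.projectionOnto_apply_eq_zero_iff, LinearMap.mem_ker, map_sub, sub_eq_zero] at h1
    exact h1.symm
  have hpp : ∀ x, p (p x) = p x := fun x => Submodule.projectionOnto_apply_left h.symm (p x)
  let L : LinearMap.range y →ₗ[R] LinearMap.range y := y.restrict fun x _ => ⟨x, rfl⟩
  have hL : Function.Bijective L := by
    constructor
    · rw [← LinearMap.ker_eq_bot, Submodule.eq_bot_iff]
      intro x hx
      refine Subtype.ext (Submodule.disjoint_def.mp h.disjoint x ?_ x.2)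
      exact congrArg Subtype.val (LinearMap.mem_ker.mp hx)
    · rintro ⟨_, x, rfl⟩
      exact ⟨p x, Subtype.ext (hp x)⟩
  let L' := LinearEquiv.ofBijective L hL
  have hL1 : ∀ x, y (L'.symm x) = x := fun x =>
    congrArg Subtype.val (LinearEquiv.apply_symm_apply L' x)
  have hL2 : ∀ x, (L'.symm x : D) = p (L'.symm x) := fun x =>
    (congrArg Subtype.val (Submodule.projectionOnto_apply_left h.symm (L'.symm x))).symm
  have hyp : ∀ x, p (y x) = ⟨y x, x, rfl⟩ := fun x =>
    Submodule.projectionOnto_apply_left h.symm ⟨y x, x, rfl⟩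
  refine ⟨(LinearMap.range y).subtype ∘ₗ p, (LinearMap.range y).subtype ∘ₗ L'.symm.toLinearMap ∘ₗ p,
    LinearMap.ext fun x => ?_, LinearMap.ext fun x => ?_, LinearMap.ext fun x => ?_,
    LinearMap.ext fun x => ?_, LinearMap.ext fun x => ?_, LinearMap.ext fun x => ?_⟩
  · change ((L'.symm (p (y x)) : LinearMap.range y) : D) = p x
    congr 1
    rw [hyp, LinearEquiv.symm_apply_eq]
    exact Subtype.ext (hp x).symm
  · exact hL1 (p x)
  · exact congrArg Subtype.val (hyp x)
  · exact hp x
  · change ((L'.symm (p (p x)) : LinearMap.range y) : D) = L'.symm (p x)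
    rw [hpp]
  · exact (hL2 (p x)).symm

variable {A : Type} [Ring A]

/-- Fitting decompositions for endomorphisms of `F`, transported from the artinian dual of `F`. -/
theorem eventually_fitting (F : Type) [AddCommGroup F] [Module A F] [Module.Free A F]
    [Module.Finite A F] [IsArtinianRing Aᵐᵒᵖ] (x : Module.End A F) :
    ∀ᶠ n in Filter.atTop, ∃ e v : Module.End A F, v * x ^ n = e ∧ x ^ n * v = e ∧
      e * x ^ n = x ^ n ∧ x ^ n * e = x ^ n ∧ v * e = v ∧ e * v = v := by
  have hpow : ∀ n, dual (x ^ n) = (dual x : Module.End Aᵐᵒᵖ (F →ₗ[A] A)) ^ n := fun n =>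
    congrArg MulOpposite.unop (map_pow (dualEnd F) x n)
  filter_upwards [LinearMap.eventually_isCompl_ker_pow_range_pow
    (dual x : Module.End Aᵐᵒᵖ (F →ₗ[A] A))] with n hn
  obtain ⟨e', v', h1, h2, h3, h4, h5, h6⟩ := exists_fitting hn
  obtain ⟨e, rfl⟩ := exists_dual_eq e'
  obtain ⟨v, rfl⟩ := exists_dual_eq v'
  rw [← hpow] at h1 h2 h3 h4
  exact ⟨e, v, dual_injective h2, dual_injective h1, dual_injective h4, dual_injective h3,
    dual_injective h6, dual_injective h5⟩

/-- Fitting decompositions in the endomorphism ring of a presentation; the partial inverses of the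
two components commute with `X.f`. -/
theorem Pres.exists_fitting [IsArtinianRing Aᵐᵒᵖ] (X : Pres A) (x : X.Ends) :
    ∃ n ≠ 0, ∃ e v : X.Ends, v * x ^ n = e ∧ x ^ n * v = e ∧
      e * x ^ n = x ^ n ∧ x ^ n * e = x ^ n := by
  obtain ⟨n, ⟨⟨e₁, v₁, h₁⟩, ⟨e₀, v₀, h₀⟩⟩, hn⟩ := (((eventually_fitting X.F₁ x.1.1).and
    (eventually_fitting X.F₀ x.1.2)).and (Filter.eventually_ne_atTop 0)).exists
  obtain ⟨a1, a2, a3, a4, a5, a6⟩ := h₁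
  obtain ⟨b1, b2, b3, b4, b5, b6⟩ := h₀
  have hx : X.f ∘ₗ (x.1.1 ^ n) = (x.1.2 ^ n) ∘ₗ X.f := (x ^ n).2
  have a2' := fun w => LinearMap.congr_fun a2 w
  have a4' := fun w => LinearMap.congr_fun a4 w
  have a6' := fun w => LinearMap.congr_fun a6 w
  have b1' := fun w => LinearMap.congr_fun b1 w
  have b3' := fun w => LinearMap.congr_fun b3 w
  have b5' := fun w => LinearMap.congr_fun b5 w
  have hx' := fun w => LinearMap.congr_fun hx w
  simp only [Module.End.mul_apply, LinearMap.comp_apply] at a2' a4' a6' b1' b3' b5' hx'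
  have he : X.f ∘ₗ e₁ = e₀ ∘ₗ X.f := by
    ext w
    change X.f (e₁ w) = e₀ (X.f w)
    have h1 : e₀ (X.f (e₁ w)) = X.f (e₁ w) := by rw [← a2', hx', b3']
    have h2 : e₀ (X.f (e₁ w)) = e₀ (X.f w) := by
      rw [← b1' (X.f (e₁ w)), ← hx', a4', hx', b1']
    rw [← h1, h2]
  have he' := fun w => LinearMap.congr_fun he w
  simp only [LinearMap.comp_apply] at he'
  have hv : X.f ∘ₗ v₁ = v₀ ∘ₗ X.f := by
    ext w
    change X.f (v₁ w) = v₀ (X.f w)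
    rw [← a6', he', ← b1', ← hx', a2', he', b5']
  exact ⟨n, hn, ⟨(e₁, e₀), he⟩, ⟨(v₁, v₀), hv⟩, Subtype.ext (Prod.ext a1 b1),
    Subtype.ext (Prod.ext a2 b2), Subtype.ext (Prod.ext a3 b3), Subtype.ext (Prod.ext a4 b4)⟩

end Idempotents

/-! ### A homomorphism with the splitting property -/

section Minimal

variable {A : Type} [Ring A]

/-- The range of the dual is strictly monotone on idempotents. -/
theorem dual_range_lt {F : Type} [AddCommGroup F] [Module A F] [Module.Free A F]
    [Module.Finite A F] {π ε : Module.End A F}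
    (h₁ : π * ε = π) (h₂ : ε * π = π) :
    LinearMap.range (dual π) ≤ LinearMap.range (dual ε) ∧
      (ε * ε = ε → π * π = π → LinearMap.range (dual ε) ≤ LinearMap.range (dual π) → π = ε) := by
  constructor
  · rintro _ ⟨α, rfl⟩
    exact ⟨dual π α, by rw [← LinearMap.comp_apply, ← dual_comp]; exact congrArg (dual · α) h₁⟩
  · intro hε hπ h
    have : dual (ε * π) = dual ε := by
      ext1 α
      obtain ⟨β, hβ⟩ := h ⟨α, rfl⟩
      change dual π (dual ε α) = _
      rw [← hβ]
      change dual (π * π) β = _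
      rw [hπ]
    rw [← h₂]
    exact dual_injective this

theorem comp_prod_eq {P Q N L : Type} [AddCommGroup P] [Module A P] [AddCommGroup Q] [Module A Q]
    [AddCommGroup N] [Module A N] [AddCommGroup L] [Module A L] (s : Q × N →ₗ[A] L)
    (p : P →ₗ[A] Q) (q : P →ₗ[A] N) :
    s ∘ₗ p.prod q = (s ∘ₗ LinearMap.inl A Q N) ∘ₗ p + (s ∘ₗ LinearMap.inr A Q N) ∘ₗ q := by
  ext x
  simp [← map_add]

theorem isUnit_one_sub_add {E : Type} [Ring E] {x z : E} (w : Eˣ) (hw : (w : E) = 1 - x)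
    (hz : IsUnit (1 - ↑w⁻¹ * z)) : IsUnit (1 - (x + z)) := by
  have h := w.isUnit.mul hz
  rwa [mul_sub, mul_one, Units.mul_inv_cancel_left, hw, sub_sub] at h

/-- Radical multiples are closed under addition: use the direct sum of the two presentations. -/
theorem State.IsRadMultiple.add {M : Type} [AddCommGroup M] [Module A M] {X : Pres A}
    {a b : X.F₀ →ₗ[A] M} (ha : a ∘ₗ X.f = 0) (hb : b ∘ₗ X.f = 0) (hab : (a + b) ∘ₗ X.f = 0)
    (h₁ : State.IsRadMultiple ⟨X, a, ha⟩) (h₂ : State.IsRadMultiple ⟨X, b, hb⟩) :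
    State.IsRadMultiple ⟨X, a + b, hab⟩ := by
  obtain ⟨⟨Y, a', ha'⟩, t, ht, hta⟩ := h₁
  obtain ⟨⟨Z, b', hb'⟩, u, hu, hub⟩ := h₂
  dsimp only at t u hta hub ht hu
  have hcomm : (Y.f.prodMap Z.f) ∘ₗ (t.b.prod u.b) = (t.c.prod u.c) ∘ₗ X.f :=
    LinearMap.ext fun x => Prod.ext (LinearMap.congr_fun t.comm x) (LinearMap.congr_fun u.comm x)
  refine ⟨⟨⟨Y.F₁ × Z.F₁, Y.F₀ × Z.F₀, Y.f.prodMap Z.f⟩, a'.coprod b', ?_⟩,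
    ⟨t.b.prod u.b, t.c.prod u.c, hcomm⟩, ?_, ?_⟩
  · ext x
    · simpa using LinearMap.congr_fun ha' x
    · simpa using LinearMap.congr_fun hb' x
  · intro s
    dsimp only at s
    let s₁ : Y.Hom X := ⟨s.b ∘ₗ LinearMap.inl A _ _, s.c ∘ₗ LinearMap.inl A _ _, by
      ext x
      have := LinearMap.congr_fun s.comm (x, 0)
      simpa using this⟩
    let s₂ : Z.Hom X := ⟨s.b ∘ₗ LinearMap.inr A _ _, s.c ∘ₗ LinearMap.inr A _ _, by
      ext x
      have := LinearMap.congr_fun s.comm (0, x)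
      simpa using this⟩
    obtain ⟨w, hw⟩ := ht s₁
    let s₃ : Z.Hom X := (Pres.Ends.hom (↑w⁻¹ : X.Ends)).comp s₂
    have h3 := isUnit_one_sub_add w hw (show IsUnit (1 - (↑w⁻¹ : X.Ends) * (s₂.comp u).toEnds) from
      hu s₃)
    have h4 : ((s.comp ⟨t.b.prod u.b, t.c.prod u.c, hcomm⟩).toEnds : X.Ends) =
        (s₁.comp t).toEnds + (s₂.comp u).toEnds :=
      Subtype.ext (Prod.ext (comp_prod_eq s.b t.b u.b) (comp_prod_eq s.c t.c u.c))
    exact h4 ▸ h3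
  · ext x
    change a' (t.c x) + b' (u.c x) = a x + b x
    rw [← hta, ← hub]; rfl

/-- A nonzero homomorphism `a`, defined on the summand `ε` of the module presented by `X`, such that
every morphism through which `a` factors is split injective on that summand. -/
theorem exists_split_state [IsArtinianRing Aᵐᵒᵖ]
    (hfin : ∀ (M : Type) [AddCommGroup M] [Module Aᵐᵒᵖ M], Module.Finite (Module.End Aᵐᵒᵖ M) M)
    (M : Type) [AddCommGroup M] [Module A M] [Nontrivial M] :
    ∃ (X : Pres A) (ε : X.Hom X) (a : X.F₀ →ₗ[A] M), a ∘ₗ X.f = 0 ∧ a ∘ₗ ε.c = a ∧ a ≠ 0 ∧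
      ε.c ∘ₗ ε.c = ε.c ∧
      ∀ (Y : Pres A) (t : X.Hom Y) (a' : Y.F₀ →ₗ[A] M), a' ∘ₗ Y.f = 0 → a' ∘ₗ t.c = a →
        ∃ g : Y.Hom X, g.c ∘ₗ t.c ∘ₗ ε.c = ε.c := by
  obtain ⟨⟨X, a₀, h₀⟩, hs⟩ := exists_not_isRadMultiple (M := M) hfin
  have hX : ∀ r : X.Ends, (a₀ ∘ₗ r.1.2) ∘ₗ X.f = 0 := fun r => by
    have := (Pres.Ends.hom r).comm
    dsimp only [Pres.Ends.hom] at this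
    rw [LinearMap.comp_assoc, ← this, ← LinearMap.comp_assoc, h₀, LinearMap.zero_comp]
  have hsub : ∀ {π ε : X.Ends}, π.1.1 = ε.1.1 → π.1.2 = ε.1.2 → π = ε :=
    fun h h' => Subtype.ext (Prod.ext h h')
  obtain ⟨ε, hε, hεB, hq⟩ := exists_minimal_idempotent
    (fun x : X.Ends => (LinearMap.range (dual x.1.1), LinearMap.range (dual x.1.2)))
    (by
      intro π ε hπ hε h₁ h₂ hne
      have p₁ := dual_range_lt (congrArg (fun x : X.Ends => x.1.1) h₁)
        (congrArg (fun x : X.Ends => x.1.1) h₂)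
      have p₀ := dual_range_lt (congrArg (fun x : X.Ends => x.1.2) h₁)
        (congrArg (fun x : X.Ends => x.1.2) h₂)
      refine lt_of_le_not_ge ⟨p₁.1, p₀.1⟩ fun h => hne (hsub ?_ ?_)
      · exact p₁.2 (congrArg (fun x : X.Ends => x.1.1) hε)
          (congrArg (fun x : X.Ends => x.1.1) hπ) h.1
      · exact p₀.2 (congrArg (fun x : X.Ends => x.1.2) hε)
          (congrArg (fun x : X.Ends => x.1.2) hπ) h.2)
    X.exists_fitting
    {r | State.IsRadMultiple ⟨X, a₀ ∘ₗ r.1.2, hX r⟩}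
    (by
      intro x hx y hy
      have := State.IsRadMultiple.add (hX x) (hX y)
        (by rw [LinearMap.add_comp, hX, hX, add_zero]) hx hy
      simp only [← LinearMap.comp_add] at this
      exact this)
    hs
  have hεc : ε.1.2 ∘ₗ ε.1.2 = ε.1.2 := congrArg (fun x : X.Ends => x.1.2) hε
  refine ⟨X, Pres.Ends.hom ε, a₀ ∘ₗ ε.1.2, hX ε, ?_, ?_, hεc, ?_⟩
  · change (a₀ ∘ₗ ε.1.2) ∘ₗ ε.1.2 = _
    rw [LinearMap.comp_assoc, hεc]
  · intro h
    refine hεB ⟨⟨X, 0, LinearMap.zero_comp _⟩, ⟨0, 0, by simp⟩, fun s => ?_, ?_⟩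
    · have : (s.comp ⟨0, 0, by simp⟩).toEnds = 0 :=
        hsub (LinearMap.comp_zero _) (LinearMap.comp_zero _)
      rw [this, sub_zero]; exact isUnit_one
    · change 0 ∘ₗ 0 = a₀ ∘ₗ ε.1.2
      rw [h, LinearMap.zero_comp]
  · intro Y t a' ha' hta
    have hnr : ¬ (t.comp (Pres.Ends.hom ε)).Radical := fun hr => hεB
      ⟨⟨Y, a', ha'⟩, t.comp (Pres.Ends.hom ε), hr, by
        change a' ∘ₗ t.c ∘ₗ ε.1.2 = a₀ ∘ₗ ε.1.2
        rw [← LinearMap.comp_assoc, hta, LinearMap.comp_assoc, hεc]⟩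
    unfold Pres.Hom.Radical at hnr
    push Not at hnr
    obtain ⟨g, hg⟩ := hnr
    let u := g.comp (t.comp (Pres.Ends.hom ε))
    have hu : u.toEnds * ε = u.toEnds := by
      have : u.toEnds = (g.comp t).toEnds * ε := rfl
      rw [this, mul_assoc, hε]
    obtain ⟨q, hqz⟩ := hq (ε * u.toEnds) (by rw [← mul_assoc, hε]) (by rw [mul_assoc, hu])
      (fun h => hg (by
        have := Pres.isUnit_one_sub_comp_comm (Pres.Ends.hom ε) u h
        convert this using 2
        exact hu.symm))
    refine ⟨(Pres.Ends.hom (q * ε)).comp g, ?_⟩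
    rw [← mul_assoc] at hqz
    exact congrArg (fun x : X.Ends => x.1.2) hqz

end Minimal

/-! ### Pure submodules and the decomposition -/

section Pure

variable {A : Type} [Ring A] {M : Type} [AddCommGroup M] [Module A M]

/-- Purity of a submodule: a finite system of linear equations, given by the presentation `X`, with
constants in `N` that is solvable in `M` is solvable in `N`. -/
def IsPure (N : Submodule A M) : Prop :=
  ∀ (X : Pres A) (m : X.F₀ →ₗ[A] M), LinearMap.range (m ∘ₗ X.f) ≤ N →
    ∃ n : X.F₀ →ₗ[A] M, LinearMap.range n ≤ N ∧ n ∘ₗ X.f = m ∘ₗ X.f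

theorem isPure_bot : IsPure (⊥ : Submodule A M) := fun X m h =>
  ⟨0, by simp, by
    rw [le_bot_iff, LinearMap.range_eq_bot] at h
    rw [h, LinearMap.zero_comp]⟩

/-- Directed unions of pure submodules are pure, because the constants of a finite system already lie
in one of them. -/
theorem isPure_sSup {c : Set (Submodule A M)} (hc : DirectedOn (· ≤ ·) c) (hne : c.Nonempty)
    (h : ∀ N ∈ c, IsPure N) : IsPure (sSup c) := by
  intro X m hm
  obtain ⟨N, hN, hle⟩ := (Submodule.fg_iff_compact (LinearMap.range (m ∘ₗ X.f))).mp
    Submodule.FG.of_finite c (sSup c) hne hc (isLUB_sSup c) hm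
  obtain ⟨n, hn, hnf⟩ := h N hN X m hle
  exact ⟨n, hn.trans (le_sSup hN), hnf⟩

/-- A proper pure submodule `N` is properly contained in a pure submodule `N ⊕ F` with `F` finitely
presented. -/
theorem exists_pure_extension [IsArtinianRing Aᵐᵒᵖ]
    (hfin : ∀ (M : Type) [AddCommGroup M] [Module Aᵐᵒᵖ M], Module.Finite (Module.End Aᵐᵒᵖ M) M)
    {N : Submodule A M} (hN : IsPure N) (hne : N ≠ ⊤) :
    ∃ F : Submodule A M, F ≠ ⊥ ∧ Module.FinitePresentation A F ∧ Disjoint N F ∧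
      IsPure (N ⊔ F) := by
  have : Nontrivial (M ⧸ N) := Submodule.Quotient.nontrivial_iff.mpr hne
  obtain ⟨X, ε, a, haf, haε, ha0, hεε, H⟩ := exists_split_state hfin (M ⧸ N)
  obtain ⟨a₁, ha₁⟩ := Module.projective_lifting_property N.mkQ a N.mkQ_surjective
  obtain ⟨n, hn, hnf⟩ := hN X a₁ (by
    rintro _ ⟨w, rfl⟩
    rw [← N.ker_mkQ, LinearMap.mem_ker, ← LinearMap.comp_apply, ← LinearMap.comp_assoc, ha₁, haf]
    rfl)
  have hmkn : ∀ x, N.mkQ (n x) = 0 := fun x => by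
    rw [← LinearMap.mem_ker, N.ker_mkQ]; exact hn ⟨x, rfl⟩
  have hφf : ((a₁ - n) ∘ₗ ε.c) ∘ₗ X.f = 0 := by
    rw [LinearMap.comp_assoc, ← ε.comm, ← LinearMap.comp_assoc, LinearMap.sub_comp, hnf, sub_self,
      LinearMap.zero_comp]
  have hφε : ((a₁ - n) ∘ₗ ε.c) ∘ₗ ε.c = (a₁ - n) ∘ₗ ε.c := by
    rw [LinearMap.comp_assoc, hεε]
  have hφa : N.mkQ ∘ₗ ((a₁ - n) ∘ₗ ε.c) = a := by
    refine LinearMap.ext fun x => ?_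
    have h1 := LinearMap.congr_fun ha₁ (ε.c x)
    have h2 := LinearMap.congr_fun haε x
    simp only [LinearMap.comp_apply] at h1 h2
    simp only [LinearMap.comp_apply, LinearMap.sub_apply, map_sub, hmkn, sub_zero]
    rw [h1, h2]
  generalize (a₁ - n) ∘ₗ ε.c = φ at hφf hφε hφa
  -- A relation between the generators that holds modulo `N` already holds in the module
  -- presented by `X`: add it to the presentation and apply the factorization property.
  have key : ∀ y, a y = 0 → ∃ w, X.f w = ε.c y := by
    intro y hy
    obtain ⟨g, hg⟩ := H ⟨X.F₁ × A, X.F₀, X.f.coprod (LinearMap.toSpanSingleton A _ (ε.c y))⟩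
      ⟨LinearMap.inl A _ _, LinearMap.id, by ext; simp⟩ a (by
        ext x
        · simpa using LinearMap.congr_fun haf x
        · have := LinearMap.congr_fun haε y
          simp only [LinearMap.comp_apply] at this
          simp [this, hy]) rfl
    refine ⟨g.b (0, 1), ?_⟩
    have h1 := LinearMap.congr_fun g.comm (0, 1)
    simp only [LinearMap.comp_apply, LinearMap.coprod_apply, map_zero, zero_add,
      LinearMap.toSpanSingleton_apply, one_smul] at h1
    rw [h1]
    exact LinearMap.congr_fun hg y
  refine ⟨LinearMap.range φ, ?_, ?_, ?_, ?_⟩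
  · rw [Ne, LinearMap.range_eq_bot]
    rintro rfl
    exact ha0 (by rw [← hφa, LinearMap.comp_zero])
  · have := Module.finitePresentation_of_projective A X.F₀
    refine Module.finitePresentation_of_surjective φ.rangeRestrict φ.surjective_rangeRestrict ?_
    rw [LinearMap.ker_rangeRestrict]
    have : LinearMap.ker φ = LinearMap.range X.f ⊔ LinearMap.range (LinearMap.id - ε.c) := by
      apply le_antisymm
      · intro y hy
        obtain ⟨w, hw⟩ := key y (by
          rw [← hφa, LinearMap.comp_apply, LinearMap.mem_ker.mp hy, map_zero])
        exact Submodule.mem_sup.mpr ⟨_, ⟨w, rfl⟩, _, ⟨y, rfl⟩, by simp [hw]⟩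
      · rw [sup_le_iff]
        constructor
        · rintro _ ⟨w, rfl⟩
          exact LinearMap.congr_fun hφf w
        · rintro _ ⟨w, rfl⟩
          have := LinearMap.congr_fun hφε w
          simp only [LinearMap.comp_apply] at this
          simp [this]
    rw [this]
    exact Submodule.FG.sup Submodule.FG.of_finite Submodule.FG.of_finite
  · rw [Submodule.disjoint_def]
    rintro _ hxN ⟨y, rfl⟩
    obtain ⟨w, hw⟩ := key y (by
      rw [← hφa, LinearMap.comp_apply, ← LinearMap.mem_ker, N.ker_mkQ]; exact hxN)
    rw [← hφε, LinearMap.comp_apply, ← hw]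
    exact LinearMap.congr_fun hφf w
  · intro Z m hm
    -- Write `m ∘ Z.f = n₀ + φ ∘ Y` with `n₀` having values in `N`.
    obtain ⟨Y, hY⟩ : ∃ Y : Z.F₁ →ₗ[A] X.F₀, ∀ k, m (Z.f k) - φ (Y k) ∈ N := by
      have hsurj : LinearMap.range (N.mkQ ∘ₗ m ∘ₗ Z.f) ≤ LinearMap.range (N.mkQ ∘ₗ φ) := by
        rintro _ ⟨k, rfl⟩
        obtain ⟨p, hp, _, ⟨y, rfl⟩, hpq⟩ := Submodule.mem_sup.mp (hm ⟨k, rfl⟩)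
        refine ⟨y, ?_⟩
        have hp0 : N.mkQ p = 0 := (Submodule.Quotient.mk_eq_zero N).mpr hp
        change N.mkQ (φ y) = N.mkQ ((m ∘ₗ Z.f) k)
        rw [← hpq, map_add, hp0, zero_add]
      obtain ⟨Y, hY⟩ := Module.projective_lifting_property (N.mkQ ∘ₗ φ).rangeRestrict
        ((N.mkQ ∘ₗ m ∘ₗ Z.f).codRestrict _ fun k => hsurj ⟨k, rfl⟩)
        (N.mkQ ∘ₗ φ).surjective_rangeRestrict
      refine ⟨Y, fun k => ?_⟩
      have := congrArg Subtype.val (LinearMap.congr_fun hY k)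
      change N.mkQ (φ (Y k)) = N.mkQ (m (Z.f k)) at this
      rw [← N.ker_mkQ, LinearMap.mem_ker, map_sub, this, sub_self]
    have hmY : ∀ k, N.mkQ (m (Z.f k)) = a (Y k) := fun k => by
      have := hY k
      rw [← N.ker_mkQ, LinearMap.mem_ker, map_sub, sub_eq_zero] at this
      rw [this, ← hφa]; rfl
    -- Factor `a` through the pushout of `X` and `Z` that identifies `Z.f k` with `ε.c (Y k)`.
    obtain ⟨g, hg⟩ := H ⟨X.F₁ × Z.F₁, X.F₀ × Z.F₀,
        (X.f ∘ₗ LinearMap.fst A _ _ - ε.c ∘ₗ Y ∘ₗ LinearMap.snd A _ _).prod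
          (Z.f ∘ₗ LinearMap.snd A _ _)⟩
      ⟨LinearMap.inl A _ _, LinearMap.inl A _ _, by ext <;> simp⟩ (a.coprod (N.mkQ ∘ₗ m)) (by
        ext x
        · simpa using LinearMap.congr_fun haf x
        · have := LinearMap.congr_fun haε (Y x)
          simp only [LinearMap.comp_apply] at this
          simpa [this, sub_eq_zero, neg_add_eq_zero] using (hmY x).symm) (by ext; simp)
    have hg1 : ∀ y, g.c (ε.c y, 0) = ε.c y := fun y => LinearMap.congr_fun hg y
    have hgY : ∀ k, φ (g.c (0, Z.f k)) = φ (Y k) := fun k => by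
      have h1 := LinearMap.congr_fun g.comm (0, k)
      change X.f (g.b (0, k)) = g.c (X.f 0 - ε.c (Y k), Z.f k) at h1
      have h2 : ((X.f 0 - ε.c (Y k), Z.f k) : X.F₀ × Z.F₀) = (0, Z.f k) - (ε.c (Y k), 0) := by
        simp
      rw [h2, map_sub, hg1] at h1
      have h3 := LinearMap.congr_fun hφf (g.b (0, k))
      have h4 := LinearMap.congr_fun hφε (Y k)
      simp only [LinearMap.comp_apply] at h3 h4
      rw [h1, map_sub, h4, LinearMap.zero_apply, sub_eq_zero] at h3
      exact h3
    let m₂ : Z.F₀ →ₗ[A] M := φ ∘ₗ g.c ∘ₗ LinearMap.inr A _ _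
    have hm₂ : ∀ k, m₂ (Z.f k) = φ (Y k) := hgY
    obtain ⟨p, hp, hpf⟩ := hN Z (m - m₂) (by
      rintro _ ⟨k, rfl⟩
      change m (Z.f k) - m₂ (Z.f k) ∈ N
      rw [hm₂]; exact hY k)
    refine ⟨p + m₂, ?_, ?_⟩
    · rintro _ ⟨x, rfl⟩
      exact Submodule.add_mem_sup (hp ⟨x, rfl⟩) ⟨_, rfl⟩
    · rw [LinearMap.add_comp, hpf, LinearMap.sub_comp, sub_add_cancel]

theorem sSupIndep_insert {s : Set (Submodule A M)} (hs : sSupIndep s) {F : Submodule A M}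
    (hF : Disjoint (sSup s) F) : sSupIndep (insert F s) := by
  have hFs : Disjoint F (sSup (insert F s \ {F})) := by
    refine hF.symm.mono_right (sSup_le_sSup ?_)
    rintro x ⟨rfl | hx, hne⟩
    · exact absurd rfl hne
    · exact hx
  intro a ha
  by_cases haF : a = F
  · rw [haF]; exact hFs
  · have has : a ∈ s := ha.resolve_left haF
    have h1 : sSup (insert F s \ {a}) ≤ sSup (s \ {a}) ⊔ F := by
      refine sSup_le ?_
      rintro x ⟨rfl | hx, hne⟩
      · exact le_sup_right
      · exact (le_sSup (show x ∈ s \ {a} from ⟨hx, hne⟩)).trans le_sup_left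
    refine Disjoint.mono_right h1 ?_
    exact Disjoint.disjoint_sup_right_of_disjoint_sup_left (hs has)
      (hF.mono_left (sup_le (le_sSup has) (sSup_le_sSup Set.sdiff_subset)))

theorem exists_decomposition [IsArtinianRing Aᵐᵒᵖ]
    (hfin : ∀ (M : Type) [AddCommGroup M] [Module Aᵐᵒᵖ M], Module.Finite (Module.End Aᵐᵒᵖ M) M) :
    ∃ s : Set (Submodule A M), (∀ F ∈ s, Module.FinitePresentation A F) ∧ sSupIndep s ∧
      sSup s = ⊤ := by
  obtain ⟨s, hs⟩ := zorn_subset {s : Set (Submodule A M) |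
      (∀ F ∈ s, Module.FinitePresentation A F) ∧ sSupIndep s ∧ IsPure (sSup s)} (by
    intro c hc hchain
    refine ⟨⋃₀ c, ⟨?_, ?_, ?_⟩, fun s hs => Set.subset_sUnion_of_mem hs⟩
    · rintro F ⟨s, hs, hF⟩
      exact (hc hs).1 F hF
    · exact iSupIndep_sUnion_of_directed hchain.directedOn fun s hs => (hc hs).2.1
    · rcases c.eq_empty_or_nonempty with rfl | hne
      · simpa using isPure_bot
      · rw [sSup_sUnion, ← sSup_image]
        refine isPure_sSup ?_ (hne.image _) ?_
        · rintro _ ⟨s, hs, rfl⟩ _ ⟨t, ht, rfl⟩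
          obtain ⟨u, hu, hsu, htu⟩ := hchain.directedOn s hs t ht
          exact ⟨_, ⟨u, hu, rfl⟩, sSup_le_sSup hsu, sSup_le_sSup htu⟩
        · rintro _ ⟨s, hs, rfl⟩
          exact (hc hs).2.2)
  refine ⟨s, hs.prop.1, hs.prop.2.1, ?_⟩
  by_contra hne
  obtain ⟨F, hF0, hFp, hdisj, hpure⟩ := exists_pure_extension hfin hs.prop.2.2 hne
  have hmem : F ∈ s := hs.le_of_ge (y := insert F s) ⟨by
      rintro G (rfl | hG)
      · exact hFp
      · exact hs.prop.1 G hG, sSupIndep_insert hs.prop.2.1 hdisj, by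
      rwa [sSup_insert, sup_comm]⟩ (Set.subset_insert F s) (Set.mem_insert F s)
  exact hF0 (disjoint_self.mp (hdisj.mono_left (le_sSup hmem)))

end Pure

end Finendo

/-- If every right `A`-module is finendo (finitely generated over its
endomorphism ring), then `A` is left pure-semisimple. -/
theorem leftPureSemisimple_of_finendo
    (A : Type) [Ring A]
    (hfinendo : ∀ (M : Type) (_ : AddCommGroup M) (_ : Module Aᵐᵒᵖ M),
      Module.Finite (Module.End Aᵐᵒᵖ M) M) :
    LeftPureSemisimple A := by
  intro M _ _
  have hfin : ∀ (M : Type) [AddCommGroup M] [Module Aᵐᵒᵖ M],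
      Module.Finite (Module.End Aᵐᵒᵖ M) M := fun M _ _ => hfinendo M _ _
  have : IsArtinianRing Aᵐᵒᵖ := Finendo.isArtinianRing hfin
  obtain ⟨s, hs, hind, htop⟩ := Finendo.exists_decomposition (M := M) hfin
  classical
  have hinternal : DirectSum.IsInternal (fun F : s => (F : Submodule A M)) :=
    DirectSum.isInternal_submodule_of_iSupIndep_of_iSup_eq_top ((sSupIndep_iff s).mp hind)
      (by rw [← sSup_eq_iSup', htop])
  exact ⟨s, inferInstance, fun F => ModuleCat.of A (F : Submodule A M), fun F => hs F F.2,
    ⟨LinearEquiv.ofBijective (DirectSum.coeLinearMap fun F : s => (F : Submodule A M)) hinternal⟩⟩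
end
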